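/- Let X be a locally connected continuum contained in the Euclidean plane ℝ². Then X has the fixed point property if and only if X has the periodic point property. -/

import Mathlib

/-- A space has the fixed point property: every continuous self-map has a fixed point. -/
def HasFPP (Y : Type*) [TopologicalSpace Y] : Prop :=
  ∀ f : Y → Y, Continuous f → ∃ x, f x = x

/-- A space has the periodic point property: every continuous self-map has a periodic point. -/
def HasPPP (Y : Type*) [TopologicalSpace Y] : Prop :=
  ∀ f : Y → Y, Continuous f → ∃ x, ∃ n : ℕ, 1 ≤ n ∧ f^[n] x = x

/-- Local fixed point property: there is an open basis whose members have closures with FPP. -/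
def HasLFPP (Y : Type*) [TopologicalSpace Y] : Prop :=
  ∃ 𝓑 : Set (Set Y), TopologicalSpace.IsTopologicalBasis 𝓑 ∧
    ∀ B ∈ 𝓑, HasFPP ↥(closure B)

/-- Weak local fixed point property. -/
def HasWLFPP (Y : Type*) [TopologicalSpace Y] : Prop :=
  ∃ 𝓑 : Set (Set Y), TopologicalSpace.IsTopologicalBasis 𝓑 ∧
    ∀ B ∈ 𝓑, ∀ f : Y → Y, Continuous f → f '' closure B ⊆ B → ∃ x ∈ B, f x = x

/-- Local periodic point property. -/
def HasLPPP (Y : Type*) [TopologicalSpace Y] : Prop :=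
  ∃ 𝓑 : Set (Set Y), TopologicalSpace.IsTopologicalBasis 𝓑 ∧
    ∀ B ∈ 𝓑, HasPPP ↥(closure B)

/-- Weak local periodic point property. -/
def HasWLPPP (Y : Type*) [TopologicalSpace Y] : Prop :=
  ∃ 𝓑 : Set (Set Y), TopologicalSpace.IsTopologicalBasis 𝓑 ∧
    ∀ B ∈ 𝓑, ∀ f : Y → Y, Continuous f → f '' closure B ⊆ B →
      ∃ x ∈ B, ∃ n : ℕ, 1 ≤ n ∧ f^[n] x = x

/-- A subset is a simple closed curve if it is homeomorphic to the unit circle. -/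
def IsSimpleClosedCurve {α : Type*} [TopologicalSpace α] (S : Set α) : Prop :=
  Nonempty (↥S ≃ₜ ↥(Metric.sphere (0 : EuclideanSpace ℝ (Fin 2)) 1))

/-- Covering dimension at most `n`: every finite open cover admits an open shrinking
of order at most `n + 1`. -/
def CoveringDimLE (Y : Type*) [TopologicalSpace Y] (n : ℕ) : Prop :=
  ∀ (ι : Type) [Finite ι] (U : ι → Set Y), (∀ i, IsOpen (U i)) → (⋃ i, U i) = Set.univ →
    ∃ V : ι → Set Y, (∀ i, IsOpen (V i)) ∧ (∀ i, V i ⊆ U i) ∧ (⋃ i, V i) = Set.univ ∧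
      ∀ y : Y, {i | y ∈ V i}.ncard ≤ n + 1

/-- A dendrite: a locally connected (metric) continuum containing no simple closed curve. -/
def IsDendrite {α : Type*} [TopologicalSpace α] (D : Set α) : Prop :=
  IsCompact D ∧ IsConnected D ∧ LocallyConnectedSpace ↥D ∧ ∀ S ⊆ D, ¬ IsSimpleClosedCurve S

/-- A local dendrite: every point has a closed neighborhood which is a dendrite. -/
def IsLocalDendrite (Y : Type*) [TopologicalSpace Y] : Prop :=
  ∀ y : Y, ∃ N : Set Y, N ∈ nhds y ∧ IsClosed N ∧ IsDendrite N

open Set Filter Topology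

/-- `g` has a continuous logarithm on `S`. -/
def HLog {E : Type*} [TopologicalSpace E] (g : E → ℂ) (S : Set E) : Prop :=
  ∃ l : E → ℂ, ContinuousOn l S ∧ ∀ z ∈ S, Complex.exp (l z) = g z

theorem HLog.mono {E : Type*} [TopologicalSpace E] {g : E → ℂ} {S T : Set E}
    (h : HLog g T) (hST : S ⊆ T) : HLog g S := by
  obtain ⟨l, hl, he⟩ := h
  exact ⟨l, hl.mono hST, fun z hz => he z (hST hz)⟩

theorem HLog.congr {E : Type*} [TopologicalSpace E] {g h : E → ℂ} {S : Set E}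
    (hg : HLog g S) (hgh : ∀ z ∈ S, h z = g z) : HLog h S := by
  obtain ⟨l, hl, he⟩ := hg
  exact ⟨l, hl, fun z hz => by rw [he z hz, hgh z hz]⟩

theorem HLog.mul {E : Type*} [TopologicalSpace E] {g h : E → ℂ} {S : Set E}
    (hg : HLog g S) (hh : HLog h S) : HLog (fun z => g z * h z) S := by
  obtain ⟨l, hl, he⟩ := hg
  obtain ⟨m, hm, hf⟩ := hh
  exact ⟨fun z => l z + m z, hl.add hm, fun z hz => by
    rw [Complex.exp_add, he z hz, hf z hz]⟩

theorem HLog.div {E : Type*} [TopologicalSpace E] {g h : E → ℂ} {S : Set E}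
    (hg : HLog g S) (hh : HLog h S) : HLog (fun z => g z / h z) S := by
  obtain ⟨l, hl, he⟩ := hg
  obtain ⟨m, hm, hf⟩ := hh
  exact ⟨fun z => l z - m z, hl.sub hm, fun z hz => by
    rw [Complex.exp_sub, he z hz, hf z hz]⟩

theorem HLog.conj {E : Type*} [TopologicalSpace E] {g : E → ℂ} {S : Set E}
    (hg : HLog g S) : HLog (fun z => (starRingEnd ℂ) (g z)) S := by
  obtain ⟨l, hl, he⟩ := hg
  refine ⟨fun z => (starRingEnd ℂ) (l z), Complex.continuous_conj.comp_continuousOn hl,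
    fun z hz => ?_⟩
  show Complex.exp ((starRingEnd ℂ) (l z)) = _
  rw [Complex.exp_conj, he z hz]

theorem HLog.const {E : Type*} [TopologicalSpace E] {S : Set E} {c : ℂ} (hc : c ≠ 0) :
    HLog (fun _ : E => c) S :=
  ⟨fun _ => Complex.log c, continuousOn_const, fun _ _ => Complex.exp_log hc⟩

theorem mem_slit_of_norm {w : ℂ} (h : ‖w - 1‖ < 1) : w ∈ Complex.slitPlane := by
  left
  have h1 := Complex.abs_re_le_norm (w - 1)
  have h2 := abs_lt.1 (lt_of_le_of_lt h1 h)
  simp at h2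
  linarith [h2.1]

theorem HLog.of_slit {E : Type*} [TopologicalSpace E] {g : E → ℂ} {S : Set E}
    (hg : ContinuousOn g S) (h : ∀ z ∈ S, g z ∈ Complex.slitPlane) : HLog g S :=
  ⟨fun z => Complex.log (g z), hg.clog h,
    fun z hz => Complex.exp_log (Complex.slitPlane_ne_zero (h z hz))⟩

theorem HLog.of_close {E : Type*} [TopologicalSpace E] {g h : E → ℂ} {S : Set E}
    (hh : HLog h S) (hg : ContinuousOn g S) (hhc : ContinuousOn h S)
    (hc : ∀ z ∈ S, ‖g z - h z‖ < ‖h z‖) : HLog g S := by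
  have h0 : ∀ z ∈ S, h z ≠ 0 := fun z hz h0 => by
    have := hc z hz
    rw [h0] at this
    simp at this
    exact absurd this (not_lt.2 (norm_nonneg _))
  have : HLog (fun z => g z / h z) S := by
    refine HLog.of_slit (hg.div hhc h0) fun z hz => mem_slit_of_norm ?_
    have h1 : g z / h z - 1 = (g z - h z) / h z := by
      field_simp [h0 z hz]
    rw [h1, norm_div, div_lt_one (norm_pos_iff.2 (h0 z hz))]
    exact hc z hz
  refine (this.mul hh).congr fun z hz => ?_
  field_simp [h0 z hz]

theorem HLog.near {E : Type*} [TopologicalSpace E] {g : E → ℂ} {S : Set E} {c : ℂ}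
    (hg : ContinuousOn g S) (hc : ∀ z ∈ S, ‖g z - c‖ < ‖c‖) : HLog g S := by
  by_cases h0 : c = 0
  · have : S = ∅ := by
      refine eq_empty_of_forall_notMem fun z hz => ?_
      have := hc z hz
      rw [h0, norm_zero] at this
      exact absurd this (not_lt.2 (norm_nonneg _))
    subst this
    exact ⟨fun _ => 0, continuousOn_const, by simp⟩
  · exact HLog.of_close (HLog.const h0) hg continuousOn_const hc

theorem exp_const {E : Type*} [TopologicalSpace E] {S : Set E} (hS : IsPreconnected S)
    {m : E → ℂ} (hm : ContinuousOn m S)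
    (he : ∀ x ∈ S, ∀ y ∈ S, Complex.exp (m x) = Complex.exp (m y)) :
    ∀ x ∈ S, ∀ y ∈ S, m x = m y := by
  intro x hx y hy
  have hm' : ContinuousOn (fun z => ((m z - m x) / (2 * Real.pi * Complex.I)).re) S :=
    Complex.continuous_re.comp_continuousOn ((hm.sub continuousOn_const).div_const _)
  have hintg : ∀ z ∈ S, ∃ n : ℤ, (m z - m x) / (2 * Real.pi * Complex.I) = n := by
    intro z hz
    obtain ⟨n, hn⟩ := Complex.exp_eq_exp_iff_exists_int.1 (he z hz x hx)
    refine ⟨n, ?_⟩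
    rw [hn]
    field_simp [Complex.two_pi_I_ne_zero]
    ring
  have himg := hS.image _ hm'
  obtain ⟨n, hn⟩ := hintg y hy
  have hmemy : ((n : ℤ) : ℝ) ∈ (fun z => ((m z - m x) / (2 * Real.pi * Complex.I)).re) '' S :=
    ⟨y, hy, by simp only [hn]; simp⟩
  have hmemx : (0 : ℝ) ∈ (fun z => ((m z - m x) / (2 * Real.pi * Complex.I)).re) '' S :=
    ⟨x, hx, by simp⟩
  have hn0 : n = 0 := by
    by_contra hne
    rcases lt_or_gt_of_ne hne with h | h
    · have h1 : (n : ℝ) ≤ -1 := by exact_mod_cast (by omega : n ≤ -1)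
      have := himg.ordConnected.out hmemy hmemx (⟨by linarith, by norm_num⟩ : (-(1/2) : ℝ) ∈ Icc (n:ℝ) 0)
      obtain ⟨z, hz, hzz⟩ := this
      obtain ⟨k, hk⟩ := hintg z hz
      simp only [hk] at hzz
      simp at hzz
      have h2 : (2 * k : ℝ) = -1 := by rw [hzz]; norm_num
      have h3 : (2 * k : ℤ) = -1 := by exact_mod_cast h2
      omega
    · have h1 : (1:ℝ) ≤ n := by exact_mod_cast (by omega : 1 ≤ n)
      have := himg.ordConnected.out hmemx hmemy (⟨by norm_num, by linarith⟩ : ((1/2) : ℝ) ∈ Icc (0:ℝ) n)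
      obtain ⟨z, hz, hzz⟩ := this
      obtain ⟨k, hk⟩ := hintg z hz
      simp only [hk] at hzz
      simp at hzz
      have h2 : (2 * k : ℝ) = 1 := by rw [hzz]; norm_num
      have h3 : (2 * k : ℤ) = 1 := by exact_mod_cast h2
      omega
  rw [hn0] at hn
  have h2 := Complex.two_pi_I_ne_zero
  rw [div_eq_iff h2] at hn
  simp at hn
  exact (sub_eq_zero.1 hn).symm

theorem hlog_star {E : Type*} [NormedAddCommGroup E] [NormedSpace ℝ E] {K : Set E}
    (hK : IsCompact K) (hs : StarConvex ℝ 0 K) {G : E → ℂ} (hG : ContinuousOn G K)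
    (h0 : ∀ z ∈ K, G z ≠ 0) : HLog G K := by
  rcases K.eq_empty_or_nonempty with rfl | hne
  · exact ⟨fun _ => 0, continuousOn_const, by simp⟩
  obtain ⟨z0, hz0, hmin⟩ := hK.exists_isMinOn hne hG.norm
  have hmpos : 0 < ‖G z0‖ := norm_pos_iff.2 (h0 z0 hz0)
  have huc := hK.uniformContinuousOn_of_continuous hG
  rw [Metric.uniformContinuousOn_iff] at huc
  obtain ⟨δ, hδ, hu⟩ := huc _ hmpos
  obtain ⟨R, hR⟩ := hK.isBounded.exists_norm_le
  obtain ⟨N, hN⟩ := exists_nat_gt (R / δ)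
  have hR0 : 0 ≤ R := (norm_nonneg _).trans (hR z0 hz0)
  have hNpos : (0:ℝ) < N := lt_of_le_of_lt (by positivity) hN
  have hmem : ∀ n : ℕ, n ≤ N → ∀ x ∈ K, ((n:ℝ) / N) • x ∈ K := by
    intro n hn x hx
    have hn' : (n:ℝ) ≤ N := by exact_mod_cast hn
    exact hs.smul_mem hx (by positivity) ((div_le_one hNpos).2 hn')
  have hcont : ∀ n : ℕ, n ≤ N → ContinuousOn (fun x => G (((n:ℝ) / N) • x)) K := fun n hn =>
    hG.comp (continuous_const_smul _).continuousOn (hmem n hn)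
  have main : ∀ n : ℕ, n ≤ N → HLog (fun x => G (((n:ℝ) / N) • x)) K := by
    intro n
    induction n with
    | zero =>
      intro _
      have hz : (0:E) ∈ K := by simpa using hmem 0 (Nat.zero_le _) z0 hz0
      refine (HLog.const (h0 0 hz)).congr fun z _ => by simp
    | succ n ih =>
      intro hn
      refine HLog.of_close (ih (by omega)) (hcont _ hn) (hcont _ (by omega)) fun z hz => ?_
      have h1 := hmin (hmem n (by omega) z hz)
      simp only [mem_ofPred_eq] at h1
      refine lt_of_lt_of_le ?_ h1
      rw [← dist_eq_norm]
      refine hu _ (hmem _ hn z hz) _ (hmem _ (by omega) z hz) ?_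
      rw [dist_eq_norm, ← sub_smul, norm_smul]
      have : ((n+1:ℕ):ℝ) / N - (n:ℝ) / N = 1 / N := by push_cast; ring
      rw [this, Real.norm_of_nonneg (by positivity)]
      have h3 := hR z hz
      rw [div_lt_iff₀ hδ] at hN
      rw [one_div_mul_eq_div, div_lt_iff₀ hNpos]
      linarith
  refine (main N le_rfl).congr fun z _ => ?_
  rw [div_self hNpos.ne', one_smul]

theorem hlog_convex {E : Type*} [NormedAddCommGroup E] [NormedSpace ℝ E] {K : Set E}
    (hK : IsCompact K) (hs : Convex ℝ K) {G : E → ℂ} (hG : ContinuousOn G K)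
    (h0 : ∀ z ∈ K, G z ≠ 0) : HLog G K := by
  rcases K.eq_empty_or_nonempty with rfl | ⟨a, ha⟩
  · exact ⟨fun _ => 0, continuousOn_const, by simp⟩
  have hcont : Continuous (fun x : E => x + a) := by fun_prop
  have hcont' : Continuous (fun x : E => x - a) := by fun_prop
  have hK' : IsCompact ((fun x => x - a) '' K) := hK.image hcont'
  have hmap : MapsTo (fun x : E => x + a) ((fun x => x - a) '' K) K := by
    rintro _ ⟨x, hx, rfl⟩
    simpa using hx
  have hst : StarConvex ℝ 0 ((fun x => x - a) '' K) := by
    have h1 : StarConvex ℝ a K := hs.starConvex ha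
    intro y hy s t hs' ht hst
    obtain ⟨x, hx, rfl⟩ := hy
    refine ⟨s • a + t • x, h1 hx hs' ht hst, ?_⟩
    have : s = 1 - t := by linarith
    subst this
    simp only [smul_zero, zero_add, smul_sub, sub_smul, one_smul]
    abel
  obtain ⟨l, hl, he⟩ := hlog_star hK' hst (hG.comp hcont.continuousOn hmap)
    (fun z hz => h0 _ (hmap hz))
  refine ⟨fun x => l (x - a), hl.comp hcont'.continuousOn (fun x hx => ⟨x, hx, rfl⟩), ?_⟩
  intro z hz
  rw [he _ ⟨z, hz, rfl⟩]
  simp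

theorem extend_log {C : Set ℂ} {Q : ℂ → ℂ}
    (hQ : ContinuousOn Q (closure Cᶜ)) (hl : HLog Q (frontier C)) :
    ∃ Q' : ℂ → ℂ, Continuous Q' ∧ (∀ z ∉ C, Q' z = Q z) ∧ ∀ z ∈ C, Q' z ≠ 0 := by
  classical
  obtain ⟨l, hlc, hle⟩ := hl
  obtain ⟨L, hL⟩ := ContinuousMap.exists_restrict_eq (isClosed_frontier (s := C))
    (⟨(frontier C).domRestrict l, hlc.domRestrict⟩ : C(frontier C, ℂ))
  have hL' : ∀ z ∈ frontier C, L z = l z := fun z hz => by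
    exact DFunLike.congr_fun hL ⟨z, hz⟩
  refine ⟨C.piecewise (fun z => Complex.exp (L z)) Q, ?_, fun z hz => ?_, fun z hz => ?_⟩
  · refine continuous_piecewise (fun z hz => ?_) ?_ hQ
    · rw [hL' z hz, hle z hz]
    · exact (Complex.continuous_exp.comp L.continuous).continuousOn
  · simp [hz]
  · simp [hz, Complex.exp_ne_zero]

/-- A map of the plane which is `z - p` far away has a zero. -/
theorem no_nonvanishing {F : ℂ → ℂ} (hF : Continuous F) (h0 : ∀ z, F z ≠ 0) {p : ℂ} {R : ℝ}
    (hR : ∀ z, R ≤ ‖z‖ → F z = z - p) : False := by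
  set r : ℝ := max R 0 + ‖p‖ + ‖p‖ + 1 with hr
  have hrp : 0 < r := by positivity
  have hlog : HLog F (Metric.closedBall 0 r) :=
    hlog_convex (isCompact_closedBall _ _) (convex_closedBall _ _) hF.continuousOn
      (fun z _ => h0 z)
  have hsph : HLog (fun z : ℂ => z) (Metric.sphere 0 r) := by
    refine HLog.of_close (hlog.mono Metric.sphere_subset_closedBall) continuousOn_id
      hF.continuousOn fun z hz => ?_
    have hz' : ‖z‖ = r := by simpa using hz
    have hR1 : R ≤ max R 0 := le_max_left _ _
    have hR2 : 0 ≤ max R 0 := le_max_right _ _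
    have hzR : R ≤ ‖z‖ := by rw [hz', hr]; linarith [norm_nonneg p]
    rw [hR z hzR]
    have h1 : ‖z‖ - ‖p‖ ≤ ‖z - p‖ := norm_sub_norm_le z p
    have : z - (z - p) = p := by ring
    rw [this]
    linarith
  obtain ⟨l, hl, he⟩ := hsph
  set c : ℝ → ℂ := fun θ => r * Complex.exp (θ * Complex.I) with hc
  have hcm : ∀ θ, c θ ∈ Metric.sphere (0:ℂ) r := by
    intro θ
    simp [hc, Complex.norm_exp_ofReal_mul_I, abs_of_pos hrp]
  have hcc : Continuous c := by fun_prop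
  have hm : Continuous fun θ : ℝ => l (c θ) - θ * Complex.I := by
    exact (hl.comp_continuous hcc hcm).sub (by fun_prop)
  have hexp : ∀ θ : ℝ, Complex.exp (l (c θ) - θ * Complex.I) = r := by
    intro θ
    rw [Complex.exp_sub, he _ (hcm θ)]
    simp [hc]
  have := exp_const isPreconnected_univ hm.continuousOn
    (fun x _ y _ => by rw [hexp, hexp]) 0 (mem_univ _) (2 * Real.pi) (mem_univ _)
  have hc0 : c 0 = c (2 * Real.pi) := by
    simp [hc]
  rw [hc0] at this
  have h2 := Complex.two_pi_I_ne_zero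
  apply h2
  push_cast at this
  linear_combination this

theorem ulc_of_lc {X : Set ℂ} (hX : IsCompact X) (hlc : LocallyConnectedSpace X) :
    ∀ ε > 0, ∃ δ > 0, ∀ x ∈ X, ∀ y ∈ X, dist x y < δ →
      ∃ A ⊆ X, IsPreconnected A ∧ x ∈ A ∧ y ∈ A ∧ ∀ a ∈ A, dist a x < ε := by
  intro ε hε
  have : CompactSpace X := isCompact_iff_compactSpace.1 hX
  have h1 : ∀ x : X, ∃ U : Set X, U ⊆ Metric.ball x (ε / 2) ∧ IsOpen U ∧ x ∈ U ∧ IsConnected U :=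
    fun x => locallyConnectedSpace_iff_subsets_isOpen_isConnected.1 hlc x _
      (Metric.ball_mem_nhds x (half_pos hε))
  choose U hU1 hU2 hU3 hU4 using h1
  obtain ⟨δ, hδ, hL⟩ := lebesgue_number_lemma_of_metric (isCompact_univ (X := X)) hU2
    (fun x _ => mem_iUnion.2 ⟨x, hU3 x⟩)
  refine ⟨δ, hδ, fun x hx y hy hxy => ?_⟩
  obtain ⟨i, hi⟩ := hL ⟨x, hx⟩ (mem_univ _)
  refine ⟨Subtype.val '' U i, ?_, (hU4 i).isPreconnected.image _ continuous_subtype_val.continuousOn,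
    ⟨⟨x, hx⟩, hi (Metric.mem_ball_self hδ), rfl⟩, ⟨⟨y, hy⟩, hi ?_, rfl⟩, ?_⟩
  · rintro _ ⟨a, _, rfl⟩
    exact a.2
  · rw [Metric.mem_ball, dist_comm]
    exact hxy
  · rintro _ ⟨a, ha, rfl⟩
    have h2 := hU1 i ha
    have h3 := hU1 i (hi (Metric.mem_ball_self hδ))
    rw [Metric.mem_ball] at h2 h3
    have h4 := dist_triangle_right a ⟨x, hx⟩ i
    have h5 : dist (a : ℂ) x = dist a ⟨x, hx⟩ := rfl
    rw [h5]
    linarith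

theorem caseA {X : Set ℂ} (hX : IsCompact X) (hconn : IsConnected X)
    (hulc : ∀ ε > 0, ∃ δ > 0, ∀ x ∈ X, ∀ y ∈ X, dist x y < δ →
      ∃ A ⊆ X, IsPreconnected A ∧ x ∈ A ∧ y ∈ A ∧ ∀ a ∈ A, dist a x < ε)
    (hlog : ∀ g : ℂ → ℂ, ContinuousOn g X → (∀ x ∈ X, g x ≠ 0) → HLog g X)
    {f : ℂ → ℂ} (hf : ContinuousOn f X) (hm : MapsTo f X X) : ∃ x ∈ X, f x = x := by
  by_contra hcon
  push Not at hcon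
  obtain ⟨p, hp⟩ := hconn.nonempty
  have hsub : ∀ x ∈ X, x - f x ≠ 0 := fun x hx h => hcon x hx (sub_eq_zero.1 h).symm
  have hfc : ContinuousOn (fun x => x - f x) X := continuousOn_id.sub hf
  obtain ⟨L, hL, hLe⟩ := hlog _ hfc hsub
  obtain ⟨x0, hx0, hmin⟩ := hX.exists_isMinOn ⟨p, hp⟩ hfc.norm
  set c := ‖x0 - f x0‖ with hc
  have hcpos : 0 < c := norm_pos_iff.2 (hsub x0 hx0)
  have hcle : ∀ x ∈ X, c ≤ ‖x - f x‖ := fun x hx => hmin hx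
  obtain ⟨δ, hδ, hA⟩ := hulc (c / 4) (by positivity)
  set d := min (δ / 2) (c / 4) with hd
  have hdpos : 0 < d := by positivity
  have hd1 : d ≤ δ / 2 := min_le_left _ _
  have hd2 : d ≤ c / 4 := min_le_right _ _
  have hlam : ∀ z : ℂ, ∃ l : ℂ → ℂ, z ∉ X → ContinuousOn l X ∧
      ∀ y ∈ X, Complex.exp (l y) = z - y := by
    intro z
    by_cases hz : z ∈ X
    · exact ⟨0, fun h => absurd hz h⟩
    · obtain ⟨l, hl⟩ := hlog (fun y => z - y) (by fun_prop) (fun y hy h => by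
        rw [sub_eq_zero] at h
        exact hz (h ▸ hy))
      exact ⟨l, fun _ => hl⟩
  choose lam hlam using hlam
  -- the local branch
  set m : ℂ → ℂ → ℂ := fun z x =>
    L x + Complex.log ((z - f x) / (x - f x)) + (lam z p - lam z (f x)) with hmdef
  have hslit : ∀ z, ∀ x ∈ X, dist z x < c → (z - f x) / (x - f x) ∈ Complex.slitPlane := by
    intro z x hx hzx
    apply mem_slit_of_norm
    have h1 : (z - f x) / (x - f x) - 1 = (z - x) / (x - f x) := by
      field_simp [hsub x hx]
      ring
    rw [h1, norm_div, div_lt_one (norm_pos_iff.2 (hsub x hx)), ← dist_eq_norm]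
    exact lt_of_lt_of_le hzx (hcle x hx)
  have hmexp : ∀ z ∉ X, ∀ x ∈ X, dist z x < c → Complex.exp (m z x) = z - p := by
    intro z hz x hx hzx
    have h1 := (hlam z hz).2 p hp
    have h2 := (hlam z hz).2 (f x) (hm hx)
    have h3 : z - f x ≠ 0 := by rw [← h2]; exact Complex.exp_ne_zero _
    simp only [hmdef]
    rw [Complex.exp_add, Complex.exp_add, Complex.exp_sub, hLe x hx, h1, h2,
      Complex.exp_log (Complex.slitPlane_ne_zero (hslit z x hx hzx))]
    field_simp [hsub x hx]
  have hmindep : ∀ z ∉ X, ∀ x ∈ X, ∀ y ∈ X, dist z x < d → dist z y < d → m z x = m z y := by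
    intro z hz x hx y hy hzx hzy
    have hxy : dist x y < δ := by
      have := dist_triangle_left x y z
      linarith
    obtain ⟨A, hAX, hAc, hxA, hyA, hAd⟩ := hA x hx y hy hxy
    have hclose : ∀ a ∈ A, dist z a < c := by
      intro a ha
      have := dist_triangle_right z a x
      have := hAd a ha
      linarith
    refine exp_const hAc ?_ (fun a ha b hb => ?_) x hxA y hyA
    · have hfA : ContinuousOn f A := hf.mono hAX
      have hlA : ContinuousOn (fun a => lam z (f a)) A :=
        (hlam z hz).1.comp hfA (fun a ha => hm (hAX ha))
      refine ((hL.mono hAX).add ?_).add (continuousOn_const.sub hlA)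
      refine ContinuousOn.clog ?_ fun a ha => hslit z a (hAX ha) (hclose a ha)
      exact (continuousOn_const.sub hfA).div (continuousOn_id.sub hfA)
        (fun a ha => hsub a (hAX ha))
    · rw [hmexp z hz a (hAX ha) (hclose a ha), hmexp z hz b (hAX hb) (hclose b hb)]
  have hmcont : ∀ z0 ∉ X, ∀ x ∈ X, dist z0 x < d → ContinuousAt (fun z => m z x) z0 := by
    intro z0 hz0 x hx hzx
    have hopen : Xᶜ ∈ 𝓝 z0 := hX.isClosed.isOpen_compl.mem_nhds hz0
    obtain ⟨r, hr, hball⟩ := Metric.mem_nhds_iff.1 hopen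
    have hfar : ∀ y ∈ X, r ≤ dist z0 y := by
      intro y hy
      by_contra h
      exact hball (by rw [Metric.mem_ball, dist_comm]; exact not_le.1 h) hy
    have hne : ∀ y ∈ X, z0 - y ≠ 0 := fun y hy h => hz0 (sub_eq_zero.1 h ▸ hy)
    have hsl : ∀ z ∈ Metric.ball z0 r, ∀ y ∈ X, (z - y) / (z0 - y) ∈ Complex.slitPlane := by
      intro z hz y hy
      apply mem_slit_of_norm
      have h1 : (z - y) / (z0 - y) - 1 = (z - z0) / (z0 - y) := by
        field_simp [hne y hy]
        ring
      rw [h1, norm_div, div_lt_one (norm_pos_iff.2 (hne y hy)), ← dist_eq_norm, ← dist_eq_norm]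
      exact lt_of_lt_of_le hz (hfar y hy)
    have hkey : ∀ z ∈ Metric.ball z0 r, lam z p - lam z (f x) =
        lam z0 p - lam z0 (f x) + Complex.log ((z - p) / (z0 - p))
          - Complex.log ((z - f x) / (z0 - f x)) := by
      intro z hz
      have hzX : z ∉ X := hball hz
      have := exp_const hconn.isPreconnected
        (m := fun y => lam z y - lam z0 y - Complex.log ((z - y) / (z0 - y))) ?_ ?_ p hp (f x) (hm hx)
      · linear_combination this
      · refine ((hlam z hzX).1.sub (hlam z0 hz0).1).sub (ContinuousOn.clog ?_ (hsl z hz))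
        exact (continuousOn_const.sub continuousOn_id).div
          (continuousOn_const.sub continuousOn_id) hne
      · have : ∀ y ∈ X, Complex.exp (lam z y - lam z0 y - Complex.log ((z - y) / (z0 - y))) = 1 := by
          intro y hy
          have h3 : z - y ≠ 0 := fun h => hzX (sub_eq_zero.1 h ▸ hy)
          rw [Complex.exp_sub, Complex.exp_sub, (hlam z hzX).2 y hy, (hlam z0 hz0).2 y hy,
            Complex.exp_log (Complex.slitPlane_ne_zero (hsl z hz y hy))]
          field_simp [h3, hne y hy]
        intro a ha b hb
        rw [this a ha, this b hb]
    have hz0b : z0 ∈ Metric.ball z0 r := Metric.mem_ball_self hr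
    have hcl : ∀ y ∈ X, ContinuousAt (fun z => Complex.log ((z - y) / (z0 - y))) z0 := by
      intro y hy
      refine ContinuousAt.clog ?_ (hsl z0 hz0b y hy)
      fun_prop
    have h6 : ContinuousAt (fun z => (z - f x) / (x - f x)) z0 :=
      (continuousAt_id.sub continuousAt_const).div_const _
    have h5 : ContinuousAt (fun z => L x + Complex.log ((z - f x) / (x - f x)) +
        (lam z0 p - lam z0 (f x) + Complex.log ((z - p) / (z0 - p))
          - Complex.log ((z - f x) / (z0 - f x)))) z0 := by
      refine (continuousAt_const.add (ContinuousAt.clog h6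
        (hslit z0 x hx (by linarith)))).add ?_
      exact (continuousAt_const.add (hcl p hp)).sub (hcl (f x) (hm hx))
    refine h5.congr ?_
    filter_upwards [Metric.ball_mem_nhds z0 hr] with z hz
    simp only [hmdef]
    rw [hkey z hz]
  -- the global logarithm near X
  set W : Set ℂ := {z | z ∉ X ∧ Metric.infDist z X < d} with hW
  have hex : ∀ z : ℂ, ∃ x, z ∈ W → x ∈ X ∧ dist z x < d := by
    intro z
    by_cases hz : z ∈ W
    · obtain ⟨x, hx, hx2⟩ := (Metric.infDist_lt_iff ⟨p, hp⟩).1 hz.2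
      exact ⟨x, fun _ => ⟨hx, hx2⟩⟩
    · exact ⟨0, fun h => absurd h hz⟩
  choose nx hnx using hex
  have hWlog : HLog (fun z => z - p) W := by
    refine ⟨fun z => m z (nx z), ?_, ?_⟩
    · intro z0 hz0
      obtain ⟨h1, h2⟩ := hnx z0 hz0
      refine ((hmcont z0 hz0.1 _ h1 h2).continuousWithinAt).congr_of_eventuallyEq ?_ rfl
      have hb : {z | dist z (nx z0) < d} ∈ 𝓝[W] z0 :=
        mem_nhdsWithin_of_mem_nhds ((isOpen_lt (by fun_prop) (by fun_prop)).mem_nhds h2)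
      filter_upwards [hb, self_mem_nhdsWithin] with z hz hzW
      obtain ⟨h3, h4⟩ := hnx z hzW
      exact hmindep z hzW.1 _ h3 _ h1 h4 hz
    · intro z hz
      obtain ⟨h1, h2⟩ := hnx z hz
      exact hmexp z hz.1 _ h1 (by linarith)
  set C : Set ℂ := {z | Metric.infDist z X ≤ d / 2} with hC
  have hfr : frontier C ⊆ W := by
    intro z hz
    have h1 : Metric.infDist z X = d / 2 :=
      frontier_le_subset_eq (Metric.continuous_infDist_pt X) continuous_const hz
    refine ⟨fun h => ?_, by rw [h1]; linarith⟩
    rw [Metric.infDist_zero_of_mem h] at h1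
    linarith
  obtain ⟨F, hF, hF1, hF2⟩ := extend_log (C := C) (Q := fun z => z - p) (by fun_prop) (hWlog.mono hfr)
  obtain ⟨R, hR⟩ := hX.isBounded.exists_norm_le
  refine no_nonvanishing hF (fun z => ?_) (p := p) (R := R + d) fun z hz => hF1 z fun hzC => ?_
  · by_cases hz : z ∈ C
    · exact hF2 z hz
    · rw [hF1 z hz]
      intro h
      rw [sub_eq_zero] at h
      apply hz
      rw [h]
      show Metric.infDist p X ≤ d / 2
      rw [Metric.infDist_zero_of_mem hp]
      positivity
  · have h1 : Metric.infDist z X < d := lt_of_le_of_lt hzC (by linarith)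
    obtain ⟨x, hx, hx2⟩ := (Metric.infDist_lt_iff ⟨p, hp⟩).1 h1
    have h3 := hR x hx
    have h4 := norm_sub_norm_le z x
    rw [dist_eq_norm] at hx2
    linarith

/-- `b` is one of the two standard local models of a simple zero at `a`. -/
def Model (a : ℂ) (b : ℂ → ℂ) : Prop :=
  b = (fun z => z - a) ∨ b = (fun z => (starRingEnd ℂ) (z - a))

theorem Model.continuous {a : ℂ} {b : ℂ → ℂ} (h : Model a b) : Continuous b := by
  rcases h with rfl | rfl
  · fun_prop
  · exact Complex.continuous_conj.comp (by fun_prop)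

theorem Model.ne_zero {a : ℂ} {b : ℂ → ℂ} (h : Model a b) {z : ℂ} (hz : z ≠ a) : b z ≠ 0 := by
  rcases h with rfl | rfl
  · exact sub_ne_zero.2 hz
  · exact (map_ne_zero (starRingEnd ℂ)).2 (sub_ne_zero.2 hz)

theorem Model.hlog {a : ℂ} {b : ℂ → ℂ} (h : Model a b) {X : Set ℂ}
    (hX : HLog (fun z => z - a) X) : HLog b X := by
  rcases h with rfl | rfl
  · exact hX
  · exact hX.conj

/-- `G` has a simple zero at `a` in the topological sense. -/
def Nice (G : ℂ → ℂ) (a : ℂ) : Prop :=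
  ∃ b : ℂ → ℂ, Model a b ∧ ∃ r > 0, HLog (fun z => G z / b z) (Metric.ball a r \ {a})

theorem kernel_vec {α β : ℂ} (h : ‖α‖ = ‖β‖) : ∃ v : ℂ, v ≠ 0 ∧ α * v + β * (starRingEnd ℂ) v = 0 := by
  by_cases h0 : α = 0
  · have : β = 0 := by
      rw [h0, norm_zero] at h
      exact norm_eq_zero.1 h.symm
    exact ⟨1, one_ne_zero, by simp [h0, this]⟩
  · obtain ⟨w, hw⟩ := IsAlgClosed.exists_pow_nat_eq (-β / α) (n := 2) (by norm_num)
    have hn : ‖w‖ ^ 2 = 1 := by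
      rw [← norm_pow, hw, norm_div, norm_neg, h, div_self]
      rw [← h]
      exact norm_ne_zero_iff.2 h0
    have hw0 : w ≠ 0 := by
      rintro rfl
      simp at hn
    have hc : w * (starRingEnd ℂ) w = 1 := by
      rw [Complex.mul_conj, Complex.normSq_eq_norm_sq, hn]
      simp
    refine ⟨w, hw0, ?_⟩
    have h2 : α * w ^ 2 = -β := by rw [hw]; field_simp
    have : w * (α * w + β * (starRingEnd ℂ) w) = 0 := by
      linear_combination h2 + β * hc
    exact (mul_eq_zero.1 this).resolve_left hw0

theorem nice_of_fderiv {G : ℂ → ℂ} (hG : Continuous G) {a : ℂ} {A : ℂ →L[ℝ] ℂ}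
    (hA : HasFDerivAt G A a) (h0 : G a = 0) (hinj : ∀ v, A v = 0 → v = 0) : Nice G a := by
  set α : ℂ := (A 1 - Complex.I * A Complex.I) / 2 with hα
  set β : ℂ := (A 1 + Complex.I * A Complex.I) / 2 with hβ
  have hAv : ∀ v : ℂ, A v = α * v + β * (starRingEnd ℂ) v := by
    intro v
    have h1 : v = v.re • (1:ℂ) + v.im • Complex.I := by
      simp [Complex.re_add_im]
    have h2 : A v = v.re • A 1 + v.im • A Complex.I := by
      conv_lhs => rw [h1]
      simp only [map_add, map_smul]
    have h3 : (starRingEnd ℂ) v = v.re - v.im * Complex.I := by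
      apply Complex.ext <;> simp
    rw [h2, h3]
    conv_rhs => rw [← Complex.re_add_im v]
    simp only [Complex.real_smul, hα, hβ, Complex.add_re, Complex.mul_re, Complex.ofReal_re, Complex.ofReal_im, Complex.I_re, Complex.I_im, Complex.add_im, Complex.mul_im]
    ring_nf
    rw [Complex.I_sq]
    ring
  have hne : ‖α‖ ≠ ‖β‖ := by
    intro h
    obtain ⟨v, hv, hv2⟩ := kernel_vec h
    exact hv (hinj v (by rw [hAv, hv2]))
  have hlit : ∀ ε > 0, ∃ r > 0, ∀ z ∈ Metric.ball a r, ‖G z - A (z - a)‖ ≤ ε * ‖z - a‖ := by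
    intro ε hε
    have := (hasFDerivAt_iff_isLittleO.1 hA).def hε
    obtain ⟨r, hr, hb⟩ := Metric.eventually_nhds_iff_ball.1 this
    refine ⟨r, hr, fun z hz => ?_⟩
    have := hb z hz
    rwa [h0, sub_zero] at this
  rcases lt_or_gt_of_ne hne with h | h
  · -- orientation reversing
    obtain ⟨r, hr, hb⟩ := hlit ((‖β‖ - ‖α‖) / 2) (by linarith)
    refine ⟨_, Or.inr rfl, r, hr, HLog.near (c := β) ?_ ?_⟩
    · exact hG.continuousOn.div (Complex.continuous_conj.comp (by fun_prop)).continuousOn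
        (fun z hz => (map_ne_zero (starRingEnd ℂ)).2 (sub_ne_zero.2 hz.2))
    · intro z hz
      have hz2 : z - a ≠ 0 := sub_ne_zero.2 hz.2
      have hz3 : (starRingEnd ℂ) (z - a) ≠ 0 := (map_ne_zero (starRingEnd ℂ)).2 hz2
      have h1 : G z / (starRingEnd ℂ) (z - a) - β =
          (α * (z - a) + (G z - A (z - a))) / (starRingEnd ℂ) (z - a) := by
        rw [hAv]
        field_simp
        ring
      rw [h1, norm_div, Complex.norm_conj, div_lt_iff₀ (norm_pos_iff.2 hz2)]
      have h2 := hb z hz.1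
      have h3 := norm_add_le (α * (z - a)) (G z - A (z - a))
      rw [norm_mul] at h3
      have h4 : 0 < ‖z - a‖ := norm_pos_iff.2 hz2
      nlinarith
  · obtain ⟨r, hr, hb⟩ := hlit ((‖α‖ - ‖β‖) / 2) (by linarith)
    refine ⟨_, Or.inl rfl, r, hr, HLog.near (c := α) ?_ ?_⟩
    · exact hG.continuousOn.div (by fun_prop) (fun z hz => sub_ne_zero.2 hz.2)
    · intro z hz
      have hz2 : z - a ≠ 0 := sub_ne_zero.2 hz.2
      have h1 : G z / (z - a) - α =
          (β * (starRingEnd ℂ) (z - a) + (G z - A (z - a))) / (z - a) := by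
        rw [hAv]
        field_simp
        ring
      rw [h1, norm_div, div_lt_iff₀ (norm_pos_iff.2 hz2)]
      have h2 := hb z hz.1
      have h3 := norm_add_le (β * (starRingEnd ℂ) (z - a)) (G z - A (z - a))
      rw [norm_mul, Complex.norm_conj] at h3
      have h4 : 0 < ‖z - a‖ := norm_pos_iff.2 hz2
      nlinarith

theorem hlog_finite_zeros {X : Set ℂ} (hX : IsCompact X) {R : ℝ}
    (hXR : X ⊆ Metric.closedBall 0 R) (hp : ∀ p ∉ X, HLog (fun z => z - p) X)
    (A : Finset ℂ) : ∀ G : ℂ → ℂ, Continuous G →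
      (∀ z ∈ Metric.closedBall (0:ℂ) R, G z = 0 → z ∈ A) →
      (∀ a ∈ A, a ∉ X ∧ Nice G a) → HLog G X := by
  classical
  induction A using Finset.induction_on with
  | empty =>
    intro G hG hz _
    refine (hlog_convex (isCompact_closedBall _ _) (convex_closedBall _ _) hG.continuousOn
      (fun z hzR h => ?_)).mono hXR
    simpa using hz z hzR h
  | insert a A ha ih =>
    intro G hG hz hn
    obtain ⟨haX, b, hb, r, hr, hlog⟩ := hn a (Finset.mem_insert_self _ _)
    have hopen : (X ∪ (A : Set ℂ))ᶜ ∈ 𝓝 a := by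
      refine (hX.isClosed.union A.finite_toSet.isClosed).isOpen_compl.mem_nhds ?_
      simp [haX, ha]
    obtain ⟨ρ, hρ, hball⟩ := Metric.mem_nhds_iff.1 hopen
    set s := min r ρ / 2 with hs
    have hmr : min r ρ ≤ r := min_le_left _ _
    have hmρ : min r ρ ≤ ρ := min_le_right _ _
    have hmpos : 0 < min r ρ := lt_min hr hρ
    have hspos : 0 < s := by positivity
    have hclos : closure (Metric.closedBall a s)ᶜ ⊆ {z | z ≠ a} := by
      have h1 : closure (Metric.closedBall a s)ᶜ ⊆ {z | s ≤ dist z a} := by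
        refine closure_minimal (fun z hz => ?_) (isClosed_le (by fun_prop) (by fun_prop))
        rw [mem_compl_iff, Metric.mem_closedBall, not_le] at hz
        exact hz.le
      intro z hz h
      have := h1 hz
      rw [h] at this
      simp at this
      linarith
    obtain ⟨Q, hQ, hQ1, hQ2⟩ := extend_log (C := Metric.closedBall a s) (Q := fun z => G z / b z)
      (hG.continuousOn.div hb.continuous.continuousOn (fun z hz => hb.ne_zero (hclos hz)))
      (hlog.mono (by
        intro z hz
        have h1 : z ∈ Metric.sphere a s := Metric.frontier_closedBall_subset_sphere hz
        rw [Metric.mem_sphere] at h1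
        refine ⟨?_, ?_⟩
        · rw [Metric.mem_ball, h1]; linarith
        · rintro rfl
          simp at h1
          linarith))
    have hfar : ∀ z ∈ X ∪ (A : Set ℂ), z ∉ Metric.closedBall a s := by
      intro z hz hzs
      refine hball ?_ hz
      rw [Metric.mem_closedBall] at hzs
      rw [Metric.mem_ball]
      linarith
    have hQX : HLog Q X := by
      refine ih Q hQ ?_ ?_
      · intro z hzR hQz
        by_cases hzC : z ∈ Metric.closedBall a s
        · exact absurd hQz (hQ2 z hzC)
        · have hza : z ≠ a := by
            rintro rfl
            exact hzC (Metric.mem_closedBall_self hspos.le)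
          rw [hQ1 z hzC, div_eq_zero_iff] at hQz
          have := hz z hzR (hQz.resolve_right (hb.ne_zero hza))
          exact (Finset.mem_insert.1 this).resolve_left hza
      · intro a' ha'
        obtain ⟨ha'X, b', hb', r', hr', hlog'⟩ := hn a' (Finset.mem_insert_of_mem ha')
        refine ⟨ha'X, b', hb', ?_⟩
        have haa : a' ≠ a := by
          rintro rfl
          exact ha ha'
        have h1 : ∀ᶠ z in 𝓝 a', ‖b z - b a'‖ < ‖b a'‖ := by
          have h2 : ContinuousAt (fun z => ‖b z - b a'‖) a' :=
            (hb.continuous.sub continuous_const).norm.continuousAt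
          refine h2.eventually_lt continuousAt_const ?_
          simpa using hb.ne_zero haa
        have h2 : ∀ᶠ z in 𝓝 a', z ∉ Metric.closedBall a s :=
          Metric.isClosed_closedBall.isOpen_compl.mem_nhds (hfar a' (Or.inr ha'))
        obtain ⟨t, ht, htb⟩ := Metric.eventually_nhds_iff_ball.1 (h1.and h2)
        refine ⟨min r' t, lt_min hr' ht, ?_⟩
        have h3 : HLog b (Metric.ball a' (min r' t) \ {a'}) :=
          HLog.near hb.continuous.continuousOn
            (fun z hz => (htb z (Metric.ball_subset_ball (min_le_right _ _) hz.1)).1)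
        have h4 := hlog'.mono (S := Metric.ball a' (min r' t) \ {a'})
          (fun z hz => ⟨Metric.ball_subset_ball (min_le_left _ _) hz.1, hz.2⟩)
        refine (h4.div h3).congr fun z hz => ?_
        rw [hQ1 z (htb z (Metric.ball_subset_ball (min_le_right _ _) hz.1)).2]
        ring
    refine (hQX.mul (hb.hlog (hp a haX))).congr fun z hz => ?_
    have hza : z ≠ a := fun h => haX (h ▸ hz)
    rw [hQ1 z (hfar z (Or.inl hz))]
    field_simp [hb.ne_zero hza]

theorem eilenberg {X : Set ℂ} (hX : IsCompact X) (hp : ∀ p ∉ X, HLog (fun z => z - p) X)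
    (g : ℂ → ℂ) (hg : ContinuousOn g X) (hg0 : ∀ x ∈ X, g x ≠ 0) : HLog g X := by
  rcases X.eq_empty_or_nonempty with rfl | hne
  · exact ⟨fun _ => 0, continuousOn_const, by simp⟩
  obtain ⟨x0, hx0, hmin⟩ := hX.exists_isMinOn hne hg.norm
  set m := ‖g x0‖ with hm
  have hmpos : 0 < m := norm_pos_iff.2 (hg0 x0 hx0)
  have hmle : ∀ x ∈ X, m ≤ ‖g x‖ := fun x hx => hmin hx
  obtain ⟨G0, hG0⟩ := ContinuousMap.exists_restrict_eq hX.isClosed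
    (⟨X.domRestrict g, hg.domRestrict⟩ : C(X, ℂ))
  have hG0' : ∀ z ∈ X, G0 z = g z := fun z hz => DFunLike.congr_fun hG0 ⟨z, hz⟩
  obtain ⟨P, hP, hPd, -⟩ := Continuous.exists_contDiff_approx 1 G0.continuous
    (ε := fun _ => m / 4) continuous_const (fun _ => by positivity)
  have hPdiff : Differentiable ℝ P := hP.differentiable (by simp)
  set Cr : Set ℂ := {z | (fderiv ℝ P z).det = 0} with hCr
  have hsard : MeasureTheory.volume (P '' Cr) = 0 :=
    MeasureTheory.addHaar_image_eq_zero_of_det_fderivWithin_eq_zero MeasureTheory.volume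
      (f' := fderiv ℝ P) (fun x _ => (hPdiff x).hasFDerivAt.hasFDerivWithinAt) (fun x hx => hx)
  obtain ⟨c, hc, hcP⟩ : ∃ c ∈ Metric.ball (0:ℂ) (m / 4), c ∉ P '' Cr := by
    by_contra hcon
    push Not at hcon
    have h1 := MeasureTheory.measure_mono_null hcon hsard
    exact (Metric.measure_ball_pos MeasureTheory.volume (0:ℂ) (by positivity : 0 < m / 4)).ne' h1
  have hcn : ‖c‖ < m / 4 := by simpa using hc
  set G : ℂ → ℂ := fun z => P z - c with hG
  have hGc : Continuous G := hP.continuous.sub continuous_const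
  have hnice : ∀ a, G a = 0 → Nice G a := by
    intro a ha
    have hfd : HasFDerivAt G (fderiv ℝ P a) a := (hPdiff a).hasFDerivAt.sub_const c
    refine nice_of_fderiv hGc hfd ha fun v hv => ?_
    have hdet : (fderiv ℝ P a).det ≠ 0 := fun h => hcP ⟨a, h, sub_eq_zero.1 ha⟩
    by_contra hv0
    apply hdet
    rw [ContinuousLinearMap.det]
    by_contra hdet2
    have hinj : Function.Injective (fderiv ℝ P a : ℂ →ₗ[ℝ] ℂ) :=
      (LinearMap.equivOfDetNeZero _ hdet2).injective
    exact hv0 (hinj (by simpa using hv))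
  have hgG : ∀ x ∈ X, ‖g x - G x‖ < m / 2 := by
    intro x hx
    have h1 := hPd x
    rw [hG0' x hx, dist_eq_norm, norm_sub_rev] at h1
    have h2 : g x - G x = (g x - P x) + c := by simp only [hG]; ring
    rw [h2]
    have := norm_add_le (g x - P x) c
    linarith
  have hGX : ∀ x ∈ X, m / 2 < ‖G x‖ := by
    intro x hx
    have h1 := hgG x hx
    have h2 := hmle x hx
    have h3 := norm_sub_norm_le (g x) (G x)
    linarith
  obtain ⟨R, hR⟩ := hX.isBounded.subset_closedBall 0
  have hfin : {z ∈ Metric.closedBall (0:ℂ) R | G z = 0}.Finite := by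
    by_contra hinf
    obtain ⟨x, hxK, hacc⟩ := Set.Infinite.exists_accPt_of_subset_isCompact hinf
      (isCompact_closedBall (0:ℂ) R) (fun z hz => hz.1)
    have hfreq := accPt_iff_frequently.1 hacc
    have hGx : G x = 0 := by
      have hcl : IsClosed {z | G z = 0} := isClosed_eq hGc continuous_const
      refine hcl.closure_subset_iff.2 (fun z hz => hz) (mem_closure_iff_frequently.2 (hfreq.mono fun z hz => hz.2.2))
    obtain ⟨b, hb, r, hr, l, hl, he⟩ := hnice x hGx
    have hev := Metric.ball_mem_nhds x hr
    obtain ⟨z, ⟨hzx, hz⟩, hzb⟩ := (hfreq.and_eventually hev).exists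
    have := he z ⟨hzb, hzx⟩
    simp only [hz.2, zero_div] at this
    exact Complex.exp_ne_zero _ this
  have hlogG : HLog G X := by
    refine hlog_finite_zeros hX hR hp hfin.toFinset G hGc (fun z hz h => by
      simpa using ⟨by simpa using hz, h⟩) fun a ha => ?_
    have ha' : G a = 0 := by
      have := hfin.mem_toFinset.1 ha
      exact this.2
    refine ⟨fun haX => ?_, hnice a ha'⟩
    have := hGX a haX
    rw [ha', norm_zero] at this
    linarith
  exact HLog.of_close hlogG hg hGc.continuousOn fun x hx => (hgG x hx).trans (hGX x hx)

inductive Tube {Y : Type} [MetricSpace Y] (ε : ℝ) : ℝ → ℝ → Y → Y → Set (ℝ × Y) → Prop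
  | base (a b : ℝ) (x y : Y) (V : Set Y) (hab : a < b) (hV : IsOpen V) (hc : IsPreconnected V)
      (hx : x ∈ V) (hy : y ∈ V) (hd : ∀ u ∈ closure V, ∀ v ∈ closure V, dist u v ≤ ε) :
      Tube ε a b x y (Icc a b ×ˢ closure V)
  | concat (a b c : ℝ) (x y z : Y) (A B : Set (ℝ × Y)) (h1 : Tube ε a b x y A)
      (h2 : Tube ε b c y z B) : Tube ε a c x z (A ∪ B)

section
variable {Y : Type} [MetricSpace Y]

theorem Tube.inv {ε : ℝ} (hε : 0 < ε) {a b : ℝ} {x y : Y} {G : Set (ℝ × Y)}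
    (h : Tube ε a b x y G) :
    a < b ∧ IsClosed G ∧ (∀ q ∈ G, q.1 ∈ Icc a b) ∧ (∀ t ∈ Icc a b, ∃ u, (t, u) ∈ G) ∧
    (a, x) ∈ G ∧ (b, y) ∈ G ∧ (∀ u, (a, u) ∈ G → dist u x ≤ ε) ∧
    (∀ u, (b, u) ∈ G → dist u y ≤ ε) ∧ (∀ t u v, (t, u) ∈ G → (t, v) ∈ G → dist u v ≤ 2 * ε) := by
  induction h with
  | base a b x y V hab hV hc hx hy hd =>
    refine ⟨hab, isClosed_Icc.prod isClosed_closure, fun q hq => hq.1,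
      fun t ht => ⟨x, ht, subset_closure hx⟩, ⟨left_mem_Icc.2 hab.le, subset_closure hx⟩,
      ⟨right_mem_Icc.2 hab.le, subset_closure hy⟩, fun u hu => hd _ hu.2 _ (subset_closure hx),
      fun u hu => hd _ hu.2 _ (subset_closure hy), fun t u v hu hv => ?_⟩
    have := hd u hu.2 v hv.2
    linarith
  | concat a b c x y z A B h1 h2 ih1 ih2 =>
    obtain ⟨i1, i2, i3, i4, i5, i6, i7, i8, i9⟩ := ih1
    obtain ⟨j1, j2, j3, j4, j5, j6, j7, j8, j9⟩ := ih2
    have hA : ∀ t u, (t, u) ∈ A → a ≤ t ∧ t ≤ b := fun t u h => i3 _ h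
    have hB : ∀ t u, (t, u) ∈ B → b ≤ t ∧ t ≤ c := fun t u h => j3 _ h
    have key : ∀ t u v, (t, u) ∈ A → (t, v) ∈ B → dist u v ≤ 2 * ε := by
      intro t u v hu hv
      obtain rfl : t = b := le_antisymm (hA _ _ hu).2 (hB _ _ hv).1
      have h1 := i8 u hu
      have h2 := j7 v hv
      have := dist_triangle_right u v y
      linarith
    refine ⟨i1.trans j1, i2.union j2, ?_, ?_, Or.inl i5, Or.inr j6, ?_, ?_, ?_⟩
    · rintro q (h | h)
      · exact ⟨(i3 q h).1, (i3 q h).2.trans j1.le⟩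
      · exact ⟨i1.le.trans (j3 q h).1, (j3 q h).2⟩
    · intro t ht
      rcases le_total t b with h | h
      · obtain ⟨u, hu⟩ := i4 t ⟨ht.1, h⟩
        exact ⟨u, Or.inl hu⟩
      · obtain ⟨u, hu⟩ := j4 t ⟨h, ht.2⟩
        exact ⟨u, Or.inr hu⟩
    · rintro u (h | h)
      · exact i7 u h
      · have := (hB _ _ h).1
        linarith
    · rintro u (h | h)
      · have := (hA _ _ h).2
        linarith
      · exact j8 u h
    · rintro t u v (hu | hu) (hv | hv)
      · exact i9 t u v hu hv
      · exact key t u v hu hv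
      · rw [dist_comm]; exact key t v u hv hu
      · exact j9 t u v hu hv

theorem Tube.exists_in [LocallyConnectedSpace Y] {ε : ℝ} (hε : 0 < ε) {V : Set Y} (hV : IsOpen V)
    (hc : IsPreconnected V) {x y : Y} (hx : x ∈ V) (hy : y ∈ V) :
    ∀ a b : ℝ, a < b → ∃ G ⊆ Icc a b ×ˢ closure V, Tube ε a b x y G := by
  refine hc.induction₂' (fun x y => ∀ a b : ℝ, a < b → ∃ G ⊆ Icc a b ×ˢ closure V,
    Tube ε a b x y G) ?_ ?_ hx hy
  · intro z hz
    obtain ⟨W, hWs, hWo, hzW, hWc⟩ := locallyConnectedSpace_iff_subsets_isOpen_isConnected.1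
      ‹_› z (V ∩ Metric.ball z (ε / 2)) (inter_mem (hV.mem_nhds hz) (Metric.ball_mem_nhds z (by positivity)))
    have hd : ∀ u ∈ closure W, ∀ v ∈ closure W, dist u v ≤ ε := by
      have hb : closure W ⊆ Metric.closedBall z (ε / 2) :=
        closure_minimal (fun w hw => Metric.ball_subset_closedBall (hWs hw).2)
          Metric.isClosed_closedBall
      intro u hu v hv
      have h1 := hb hu
      have h2 := hb hv
      rw [Metric.mem_closedBall] at h1 h2
      have := dist_triangle_right u v z
      linarith
    have hsub : ∀ a b : ℝ, Icc a b ×ˢ closure W ⊆ Icc a b ×ˢ closure V := fun a b =>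
      prod_mono_right (closure_mono fun w hw => (hWs hw).1)
    filter_upwards [mem_nhdsWithin_of_mem_nhds (hWo.mem_nhds hzW)] with w hw
    exact ⟨fun a b hab => ⟨_, hsub a b, .base a b z w W hab hWo hWc.isPreconnected hzW hw hd⟩,
      fun a b hab => ⟨_, hsub a b, .base a b w z W hab hWo hWc.isPreconnected hw hzW hd⟩⟩
  · intro x y z _ _ _ h1 h2 a b hab
    obtain ⟨A, hA, hTA⟩ := h1 a ((a + b) / 2) (by linarith)
    obtain ⟨B, hB, hTB⟩ := h2 ((a + b) / 2) b (by linarith)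
    refine ⟨A ∪ B, union_subset (hA.trans (prod_mono_left (Icc_subset_Icc_right (by linarith))))
      (hB.trans (prod_mono_left (Icc_subset_Icc_left (by linarith)))), .concat _ _ _ _ _ _ _ _ hTA hTB⟩

theorem Tube.refine [LocallyConnectedSpace Y] {ε δ : ℝ} (hδ : 0 < δ) {a b : ℝ} {x y : Y}
    {G : Set (ℝ × Y)} (h : Tube ε a b x y G) : ∃ G' ⊆ G, Tube δ a b x y G' := by
  induction h with
  | base a b x y V hab hV hc hx hy hd => exact Tube.exists_in hδ hV hc hx hy a b hab
  | concat a b c x y z A B h1 h2 ih1 ih2 =>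
    obtain ⟨A', hA, hA'⟩ := ih1
    obtain ⟨B', hB, hB'⟩ := ih2
    exact ⟨A' ∪ B', union_subset_union hA hB, .concat _ _ _ _ _ _ _ _ hA' hB'⟩

theorem joined_closure [CompactSpace Y] [LocallyConnectedSpace Y] {V : Set Y} (hV : IsOpen V)
    (hc : IsPreconnected V) {x y : Y} (hx : x ∈ V) (hy : y ∈ V) : JoinedIn (closure V) x y := by
  let T (n : ℕ) := {G : Set (ℝ × Y) // G ⊆ Icc (0:ℝ) 1 ×ˢ closure V ∧ Tube (1 / ((n:ℝ) + 1)) 0 1 x y G}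
  have hpos : ∀ n : ℕ, 0 < 1 / ((n:ℝ) + 1) := fun n => by positivity
  have hnext : ∀ n (G : T n), ∃ G' : T (n + 1), G'.1 ⊆ G.1 := by
    intro n G
    obtain ⟨G', h1, h2⟩ := Tube.refine (hpos (n + 1)) G.2.2
    exact ⟨⟨G', h1.trans G.2.1, h2⟩, h1⟩
  choose nx hnx using hnext
  obtain ⟨G0, hG0, hG0'⟩ := Tube.exists_in (hpos 0) hV hc hx hy 0 1 one_pos
  let S : ∀ n, T n := fun n => Nat.rec ⟨G0, hG0, hG0'⟩ nx n
  have hS : ∀ n, (S (n + 1)).1 ⊆ (S n).1 := fun n => hnx n (S n)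
  have hinv := fun n => (S n).2.2.inv (hpos n)
  let G : Set (ℝ × Y) := ⋂ n, (S n).1
  have hGc : IsClosed G := isClosed_iInter fun n => (hinv n).2.1
  have hex : ∀ t : unitInterval, ∃ u, ((t : ℝ), u) ∈ G := by
    intro t
    have hcl : ∀ n, IsClosed {u : Y | ((t : ℝ), u) ∈ (S n).1} := fun n =>
      (hinv n).2.1.preimage (by fun_prop)
    have := IsCompact.nonempty_iInter_of_sequence_nonempty_isCompact_isClosed
      (fun n => {u : Y | ((t : ℝ), u) ∈ (S n).1}) (fun n u hu => hS n hu)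
      (fun n => (hinv n).2.2.2.1 t t.2) (hcl 0).isCompact hcl
    obtain ⟨u, hu⟩ := this
    rw [mem_iInter] at hu
    exact ⟨u, mem_iInter.2 hu⟩
  have huniq : ∀ t u v, (t, u) ∈ G → (t, v) ∈ G → u = v := by
    intro t u v hu hv
    have hle : ∀ n : ℕ, dist u v ≤ 2 * (1 / ((n:ℝ) + 1)) := fun n =>
      (hinv n).2.2.2.2.2.2.2.2 t u v (mem_iInter.1 hu n) (mem_iInter.1 hv n)
    have hlim : Tendsto (fun n : ℕ => 2 * (1 / ((n:ℝ) + 1))) atTop (𝓝 (2 * 0)) :=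
      tendsto_one_div_add_atTop_nhds_zero_nat.const_mul 2
    have := ge_of_tendsto' hlim hle
    exact dist_le_zero.1 (by linarith)
  choose f hf using hex
  have hfc : Continuous f := by
    rw [continuous_iff_isClosed]
    intro C hC
    have h1 : IsClosed (Prod.fst '' (G ∩ Prod.snd ⁻¹' C)) :=
      isClosedMap_fst_of_compactSpace _ (hGc.inter (hC.preimage continuous_snd))
    have h2 : f ⁻¹' C = (Subtype.val : unitInterval → ℝ) ⁻¹' (Prod.fst '' (G ∩ Prod.snd ⁻¹' C)) := by
      ext t
      constructor
      · intro ht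
        exact ⟨(t, f t), ⟨hf t, ht⟩, rfl⟩
      · rintro ⟨⟨s, u⟩, ⟨h3, h4⟩, h5⟩
        obtain rfl : s = t := h5
        have := huniq _ _ _ h3 (hf t)
        subst this
        exact h4
    rw [h2]
    exact h1.preimage continuous_subtype_val
  have h0 : f 0 = x := huniq 0 _ _ (hf 0) (mem_iInter.2 fun n => (hinv n).2.2.2.2.1)
  have h1 : f 1 = y := huniq 1 _ _ (hf 1) (mem_iInter.2 fun n => (hinv n).2.2.2.2.2.1)
  exact ⟨⟨⟨f, hfc⟩, h0, h1⟩, fun t => ((S 0).2.1 (mem_iInter.1 (hf t) 0)).2⟩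

end

theorem joinedIn_coe {X : Set ℂ} {S : Set X} {x y : X} (h : JoinedIn S x y) {T : Set ℂ}
    (hT : ∀ z ∈ S, (z : ℂ) ∈ T) : JoinedIn T (x : ℂ) y := by
  obtain ⟨γ, hγ⟩ := h
  exact ⟨γ.map continuous_subtype_val, fun t => hT _ (hγ t)⟩

theorem peano_joined {X : Set ℂ} (hX : IsCompact X) (hconn : IsConnected X)
    (hlc : LocallyConnectedSpace X) {x y : ℂ} (hx : x ∈ X) (hy : y ∈ X) : JoinedIn X x y := by
  have : CompactSpace X := isCompact_iff_compactSpace.1 hX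
  have : PreconnectedSpace X := isPreconnected_iff_preconnectedSpace.1 hconn.isPreconnected
  exact joinedIn_coe (joined_closure isOpen_univ isPreconnected_univ (mem_univ (⟨x, hx⟩ : X))
    (mem_univ ⟨y, hy⟩)) fun z _ => z.2

theorem peano_local {X : Set ℂ} (hX : IsCompact X)
    (hlc : LocallyConnectedSpace X) {x : ℂ} (hx : x ∈ X) {ε : ℝ} (hε : 0 < ε) :
    ∃ δ > 0, ∀ z ∈ X, dist z x < δ → JoinedIn (X ∩ Metric.ball x ε) x z := by
  have : CompactSpace X := isCompact_iff_compactSpace.1 hX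
  obtain ⟨W, hWs, hWo, hzW, hWc⟩ := locallyConnectedSpace_iff_subsets_isOpen_isConnected.1
    hlc ⟨x, hx⟩ _ (Metric.ball_mem_nhds _ (half_pos hε))
  obtain ⟨δ, hδ, hb⟩ := Metric.isOpen_iff.1 hWo _ hzW
  refine ⟨δ, hδ, fun z hz hd => ?_⟩
  have hzW' : (⟨z, hz⟩ : X) ∈ W := hb hd
  refine joinedIn_coe (joined_closure hWo hWc.isPreconnected hzW hzW') fun w hw => ⟨w.2, ?_⟩
  have := (closure_mono hWs).trans Metric.closure_ball_subset_closedBall hw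
  rw [Metric.mem_closedBall] at this
  have h2 : dist (w : ℂ) x ≤ ε / 2 := this
  rw [Metric.mem_ball]
  linarith

theorem lift_joined {X : Set ℂ} {p : ℂ} (hp : p ∉ X) {x y w : ℂ} (h : JoinedIn X x y)
    (hw : Complex.exp w = x - p) :
    ∃ w', Complex.exp w' = y - p ∧ JoinedIn {w | p + Complex.exp w ∈ X} w w' := by
  obtain ⟨γ, hγ⟩ := h
  have hγ' : ∀ t, γ.extend t ∈ X := by
    intro t
    have h1 : γ.extend t ∈ range γ.extend := mem_range_self t
    rw [Path.extend_range] at h1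
    obtain ⟨s, hs⟩ := h1
    rw [← hs]
    exact hγ s
  obtain ⟨l, hl, hle⟩ := hlog_convex (G := fun t : ℝ => γ.extend t - p) (isCompact_Icc (a := (0:ℝ)) (b := 1))
    (convex_Icc _ _) (by fun_prop) (fun t _ => sub_ne_zero.2 fun h => hp (h ▸ hγ' t))
  have hc : Complex.exp (w - l 0) = 1 := by
    rw [Complex.exp_sub, hw, hle 0 (by simp)]
    simp only [Path.extend_zero]
    have h0 := hγ 0
    rw [γ.source] at h0
    exact div_self (sub_ne_zero.2 fun h => hp (h ▸ h0))
  have hall : ∀ t ∈ Icc (0:ℝ) 1, Complex.exp (l t + (w - l 0)) = γ.extend t - p := by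
    intro t ht
    rw [Complex.exp_add, hc, mul_one, hle t ht]
  refine ⟨l 1 + (w - l 0), ?_, JoinedIn.ofLine (f := fun t => l t + (w - l 0))
    (hl.add continuousOn_const) (by ring) rfl ?_⟩
  · simpa using hall 1 (by simp)
  · rintro _ ⟨t, ht, rfl⟩
    simp only [mem_ofPred_eq]
    rw [hall t ht, add_sub_cancel]
    exact hγ' t

theorem exists_deck {X : Set ℂ} (hX : IsCompact X) (hconn : IsConnected X)
    (hlc : LocallyConnectedSpace X) {p : ℂ} (hp : p ∉ X) (hno : ¬ HLog (fun z => z - p) X) :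
    ∃ w w', w ≠ w' ∧ Complex.exp w = Complex.exp w' ∧
      JoinedIn {w | p + Complex.exp w ∈ X} w w' := by
  by_contra hcon
  push Not at hcon
  have huniq : ∀ w w', JoinedIn {w | p + Complex.exp w ∈ X} w w' →
      Complex.exp w = Complex.exp w' → w = w' := by
    intro w w' h1 h2
    by_contra h3
    exact hcon w w' h3 h2 h1
  apply hno
  have hne : ∀ x ∈ X, x - p ≠ 0 := fun x hx => sub_ne_zero.2 fun h => hp (h ▸ hx)
  obtain ⟨x0, hx0⟩ := hconn.nonempty
  have hw0 : Complex.exp (Complex.log (x0 - p)) = x0 - p := Complex.exp_log (hne x0 hx0)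
  set w0 := Complex.log (x0 - p)
  have hex : ∀ x, ∃ w, x ∈ X → Complex.exp w = x - p ∧
      JoinedIn {w | p + Complex.exp w ∈ X} w0 w := by
    intro x
    by_cases hx : x ∈ X
    · obtain ⟨w, h1, h2⟩ := lift_joined hp (peano_joined hX hconn hlc hx0 hx) hw0
      exact ⟨w, fun _ => ⟨h1, h2⟩⟩
    · exact ⟨0, fun h => absurd h hx⟩
  choose l hl using hex
  refine ⟨l, fun x hx => ?_, fun z hz => (hl z hz).1⟩
  have hε : 0 < ‖x - p‖ := norm_pos_iff.2 (hne x hx)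
  obtain ⟨δ, hδ, hj⟩ := peano_local hX hlc hx hε
  have hslit : ∀ z ∈ Metric.ball x ‖x - p‖, (z - p) / (x - p) ∈ Complex.slitPlane := by
    intro z hz
    apply mem_slit_of_norm
    have h1 : (z - p) / (x - p) - 1 = (z - x) / (x - p) := by
      field_simp [hne x hx]
      ring
    rw [h1, norm_div, div_lt_one hε, ← dist_eq_norm]
    exact hz
  set B : ℂ → ℂ := fun z => l x + Complex.log ((z - p) / (x - p)) with hB
  have hBc : ContinuousOn B (Metric.ball x ‖x - p‖) :=
    continuousOn_const.add (ContinuousOn.clog (by fun_prop) hslit)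
  have hBx : B x = l x := by
    simp [hB, div_self (hne x hx)]
  have hBe : ∀ z ∈ X, Complex.exp (B z) = z - p := by
    intro z hz
    simp only [hB]
    rw [Complex.exp_add, (hl x hx).1, Complex.exp_log (div_ne_zero (hne z hz) (hne x hx))]
    field_simp [hne x hx]
  have hBl : ∀ z ∈ X, dist z x < δ → l z = B z := by
    intro z hz hd
    have h1 := (hj z hz hd).map_continuousOn (hBc.mono inter_subset_right)
    rw [hBx] at h1
    have h2 : JoinedIn {w | p + Complex.exp w ∈ X} (l x) (B z) := by
      refine h1.mono ?_
      rintro _ ⟨u, hu, rfl⟩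
      simp only [mem_ofPred_eq]
      rw [hBe u hu.1, add_sub_cancel]
      exact hu.1
    refine huniq _ _ ((hl z hz).2.symm.trans ((hl x hx).2.trans h2)) ?_
    rw [(hl z hz).1, hBe z hz]
  have hcx : ContinuousWithinAt B X x :=
    (hBc.continuousAt (Metric.ball_mem_nhds x hε)).continuousWithinAt
  refine hcx.congr_of_eventuallyEq ?_ (hBx ▸ rfl)
  filter_upwards [self_mem_nhdsWithin, mem_nhdsWithin_of_mem_nhds (Metric.ball_mem_nhds x hδ)]
    with z hz hd
  exact hBl z hz hd

def Thin (k : ℝ → ℂ) (E : Set ℝ) : Prop :=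
  IsClosed E ∧ E ⊆ Icc 0 1 ∧ 0 ∈ E ∧ 1 ∈ E ∧
    ∀ a ∈ E, ∀ b ∈ E, a < b → (∀ e ∈ E, ¬ (a < e ∧ e < b)) → k a = k b

theorem last_le {E : Set ℝ} (hE : IsClosed E) {x : ℝ} (h0 : ∃ a ∈ E, a ≤ x) :
    ∃ s ∈ E, s ≤ x ∧ ∀ e ∈ E, e ≤ x → e ≤ s := by
  obtain ⟨a, ha, hax⟩ := h0
  have hc : IsCompact (E ∩ Icc a x) := isCompact_Icc.inter_left hE
  obtain ⟨s, hs, hmax⟩ := hc.exists_isMaxOn ⟨a, ha, le_refl a, hax⟩ continuousOn_id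
  refine ⟨s, hs.1, hs.2.2, fun e he hex => ?_⟩
  rcases le_total a e with h | h
  · exact hmax ⟨he, h, hex⟩
  · exact h.trans hs.2.1

theorem first_ge {E : Set ℝ} (hE : IsClosed E) {x : ℝ} (h0 : ∃ a ∈ E, x ≤ a) :
    ∃ s ∈ E, x ≤ s ∧ ∀ e ∈ E, x ≤ e → s ≤ e := by
  obtain ⟨a, ha, hax⟩ := h0
  have hc : IsCompact (E ∩ Icc x a) := isCompact_Icc.inter_left hE
  obtain ⟨s, hs, hmin⟩ := hc.exists_isMinOn ⟨a, ha, hax, le_refl a⟩ continuousOn_id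
  refine ⟨s, hs.1, hs.2.1, fun e he hex => ?_⟩
  rcases le_total e a with h | h
  · exact hmin ⟨he, hex, h⟩
  · exact hs.2.2.trans h

theorem exists_min_thin {k : ℝ → ℂ} (hk : Continuous k) :
    ∃ E, Minimal (Thin k) E := by
  refine zorn_superset {E | Thin k E} fun c hc hchain => ?_
  rcases c.eq_empty_or_nonempty with rfl | hne
  · refine ⟨Icc 0 1, ⟨isClosed_Icc, Subset.rfl, by simp, by simp, fun a ha b hb hab hg => ?_⟩,
      by simp⟩
    exfalso
    exact hg ((a + b) / 2) ⟨by linarith [ha.1, hb.1], by linarith [ha.2, hb.2]⟩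
      ⟨by linarith, by linarith⟩
  refine ⟨⋂₀ c, ⟨isClosed_sInter fun F hF => (hc hF).1, ?_, fun F hF => (hc hF).2.2.1,
    fun F hF => (hc hF).2.2.2.1, ?_⟩, fun s hs => sInter_subset_of_mem hs⟩
  · obtain ⟨F, hF⟩ := hne
    exact (sInter_subset_of_mem hF).trans (hc hF).2.1
  intro a ha b hb hab hg
  by_contra hne'
  have hd : 0 < dist (k a) (k b) := dist_pos.2 hne'
  set η := dist (k a) (k b) / 2 with hη
  obtain ⟨δ1, hδ1, h1⟩ := Metric.continuous_iff.1 hk a η (by positivity)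
  obtain ⟨δ2, hδ2, h2⟩ := Metric.continuous_iff.1 hk b η (by positivity)
  set δ := min (min δ1 δ2) ((b - a) / 2) / 2 with hδ
  have hδpos : 0 < δ := by
    have : 0 < b - a := by linarith
    positivity
  have hm1 : min (min δ1 δ2) ((b - a) / 2) ≤ δ1 := (min_le_left _ _).trans (min_le_left _ _)
  have hm2 : min (min δ1 δ2) ((b - a) / 2) ≤ δ2 := (min_le_left _ _).trans (min_le_right _ _)
  have hm3 : min (min δ1 δ2) ((b - a) / 2) ≤ (b - a) / 2 := min_le_right _ _
  -- some member of the chain misses the middle interval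
  obtain ⟨F, hF, hmiss⟩ : ∃ F ∈ c, ∀ e ∈ F, ¬ (a + δ ≤ e ∧ e ≤ b - δ) := by
    by_contra hcon
    push Not at hcon
    have : c.Nonempty := hne
    have : Nonempty c := hne.to_subtype
    have := IsCompact.nonempty_iInter_of_directed_nonempty_isCompact_isClosed
      (fun F : c => F.1 ∩ Icc (a + δ) (b - δ)) (by
        intro F G
        rcases hchain.total F.2 G.2 with h | h
        · exact ⟨F, Subset.rfl, inter_subset_inter_left _ h⟩
        · exact ⟨G, inter_subset_inter_left _ h, Subset.rfl⟩)
      (fun F => by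
        obtain ⟨e, he, he1, he2⟩ := hcon F.1 F.2
        exact ⟨e, he, he1, he2⟩)
      (fun F => isCompact_Icc.inter_left (hc F.2).1)
      (fun F => (hc F.2).1.inter isClosed_Icc)
    obtain ⟨e, he⟩ := this
    rw [mem_iInter] at he
    obtain ⟨F0, hF0⟩ := hne
    have he0 := (he ⟨F0, hF0⟩).2
    refine hg e (fun F hF => (he ⟨F, hF⟩).1) ⟨?_, ?_⟩
    · linarith [he0.1]
    · linarith [he0.2]
  obtain ⟨a', ha', ha'1, ha'2⟩ := last_le (hc hF).1 (x := a + δ) ⟨a, ha F hF, by linarith⟩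
  obtain ⟨b', hb', hb'1, hb'2⟩ := first_ge (hc hF).1 (x := b - δ) ⟨b, hb F hF, by linarith⟩
  have e1 := ha'2 a (ha F hF) (by linarith)
  have e2 := hb'2 b (hb F hF) (by linarith)
  have hk' : k a' = k b' := by
    refine (hc hF).2.2.2.2 a' ha' b' hb' (by linarith) fun e he hee => ?_
    rcases le_total e (a + δ) with h | h
    · linarith [ha'2 e he h, hee.1]
    · rcases le_total e (b - δ) with h' | h'
      · exact hmiss e he ⟨h, h'⟩
      · linarith [hb'2 e he h', hee.2]
  have d1 := h1 a' (by rw [Real.dist_eq, abs_lt]; constructor <;> linarith)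
  have d2 := h2 b' (by rw [Real.dist_eq, abs_lt]; constructor <;> linarith)
  rw [hk'] at d1
  have := dist_triangle_left (k a) (k b) (k b')
  linarith

theorem min_thin_gap {k : ℝ → ℂ} {E : Set ℝ} (hE : Minimal (Thin k) E) {a b : ℝ} (ha : a ∈ E)
    (hb : b ∈ E) (hab : a < b) (hk : k a = k b) : ∀ e ∈ E, ¬ (a < e ∧ e < b) := by
  obtain ⟨⟨hcl, hsub, h0, h1, hgap⟩, hmin⟩ := hE
  have hT : Thin k (E \ Ioo a b) := by
    refine ⟨hcl.sdiff isOpen_Ioo, sdiff_subset.trans hsub, ⟨h0, ?_⟩, ⟨h1, ?_⟩, ?_⟩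
    · intro h
      linarith [(hsub ha).1, h.1]
    · intro h
      linarith [(hsub hb).2, h.2]
    intro c hc d hd hcd hg
    by_cases hgE : ∀ e ∈ E, ¬ (c < e ∧ e < d)
    · exact hgap c hc.1 d hd.1 hcd hgE
    push Not at hgE
    obtain ⟨e, he, hce, hed⟩ := hgE
    have heab : a < e ∧ e < b := by
      by_contra hh
      exact hg e ⟨he, hh⟩ ⟨hce, hed⟩
    have hca : c = a := by
      rcases lt_trichotomy c a with h | h | h
      · exact absurd ⟨h, heab.1.trans hed⟩ (hg a ⟨ha, fun h => lt_irrefl _ h.1⟩)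
      · exact h
      · exact absurd ⟨h, hce.trans heab.2⟩ hc.2
    have hdb : d = b := by
      rcases lt_trichotomy d b with h | h | h
      · exact absurd ⟨heab.1.trans hed, h⟩ hd.2
      · exact h
      · exact absurd ⟨hce.trans heab.2, h⟩ (hg b ⟨hb, fun h => lt_irrefl _ h.2⟩)
    rw [hca, hdb, hk]
  intro e he hee
  exact (hmin hT sdiff_subset he).2 hee

theorem exists_monotone_fibres {k : ℝ → ℂ} (hk : Continuous k) :
    ∃ h : ℝ → ℂ, Continuous h ∧ h 0 = k 0 ∧ h 1 = k 1 ∧ (∀ x, ∃ t ∈ Icc (0:ℝ) 1, h x = k t) ∧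
      ∀ a b x, a ∈ Icc (0:ℝ) 1 → b ∈ Icc (0:ℝ) 1 → a ≤ x → x ≤ b → h a = h b → h x = h a := by
  obtain ⟨E, hE⟩ := exists_min_thin hk
  obtain ⟨⟨hcl, hsub, h0, h1, hgap⟩, -⟩ := id hE
  have hs : ∀ x : ℝ, ∃ s, 0 ≤ x → s ∈ E ∧ s ≤ x ∧ ∀ e ∈ E, e ≤ x → e ≤ s := by
    intro x
    by_cases hx : 0 ≤ x
    · obtain ⟨s, hs⟩ := last_le hcl ⟨0, h0, hx⟩
      exact ⟨s, fun _ => hs⟩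
    · exact ⟨0, fun h => absurd h hx⟩
  choose s hs using hs
  have hmono : ∀ x y, 0 ≤ x → x ≤ y → s x ≤ s y := fun x y hx hxy =>
    (hs y (hx.trans hxy)).2.2 _ (hs x hx).1 ((hs x hx).2.1.trans hxy)
  have hosc : ∀ x y, 0 ≤ x → x ≤ y → y ≤ 1 → k (s x) = k (s y) ∨
      ∃ u v, k (s x) = k u ∧ k (s y) = k v ∧ x ≤ u ∧ u ≤ v ∧ v ≤ y := by
    intro x y hx hxy hy
    obtain ⟨u, hu, hxu, humin⟩ := first_ge hcl (x := x) ⟨1, h1, hxy.trans hy⟩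
    have hku : k (s x) = k u := by
      rcases ((hs x hx).2.1.trans hxu).eq_or_lt with h | h
      · rw [h]
      refine hgap _ (hs x hx).1 _ hu h fun e he hee => ?_
      rcases le_total e x with h' | h'
      · linarith [(hs x hx).2.2 e he h', hee.1]
      · linarith [humin e he h', hee.2]
    rcases le_or_gt u y with h | h
    · exact Or.inr ⟨u, s y, hku, rfl, hxu, (hs y (hx.trans hxy)).2.2 u hu h,
        (hs y (hx.trans hxy)).2.1⟩
    · left
      have : s y ≤ x := by
        by_contra hh
        push Not at hh
        have h2 := humin (s y) (hs y (hx.trans hxy)).1 hh.le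
        linarith [(hs y (hx.trans hxy)).2.1]
      rw [le_antisymm (hmono x y hx hxy) ((hs x hx).2.2 _ (hs y (hx.trans hxy)).1 this)]
  have hcont : ContinuousOn (fun x => k (s x)) (Icc 0 1) := by
    have huc := (isCompact_Icc (a := (0:ℝ)) (b := 1)).uniformContinuousOn_of_continuous
      hk.continuousOn
    rw [Metric.uniformContinuousOn_iff] at huc
    rw [Metric.continuousOn_iff]
    intro b hb ε hε
    obtain ⟨δ, hδ, hδ'⟩ := huc ε hε
    refine ⟨δ, hδ, fun a ha hab => ?_⟩
    have main : ∀ x ∈ Icc (0:ℝ) 1, ∀ y ∈ Icc (0:ℝ) 1, x ≤ y → dist x y < δ →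
        dist (k (s x)) (k (s y)) < ε := by
      intro x hx y hy hxy hd
      rcases hosc x y hx.1 hxy hy.2 with h | ⟨u, v, e1, e2, e3, e4, e5⟩
      · rw [h, dist_self]; exact hε
      · rw [e1, e2]
        refine hδ' u ⟨hx.1.trans e3, (e4.trans e5).trans hy.2⟩ v
          ⟨hx.1.trans (e3.trans e4), e5.trans hy.2⟩ ?_
        rw [Real.dist_eq, abs_lt] at hd ⊢
        constructor <;> linarith
    rcases le_total a b with h | h
    · exact main a ha b hb h hab
    · rw [dist_comm] at hab ⊢
      exact main b hb a ha h hab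
  have hclamp : ∀ x : ℝ, max 0 (min 1 x) ∈ Icc (0:ℝ) 1 := fun x =>
    ⟨le_max_left _ _, max_le zero_le_one (min_le_left _ _)⟩
  have hcl_eq : ∀ x ∈ Icc (0:ℝ) 1, max 0 (min 1 x) = x := fun x hx => by
    rw [min_eq_right hx.2, max_eq_right hx.1]
  have hs0 : s 0 = 0 := le_antisymm (hs 0 le_rfl).2.1 ((hs 0 le_rfl).2.2 0 h0 le_rfl)
  have hs1 : s 1 = 1 := le_antisymm (hs 1 zero_le_one).2.1 ((hs 1 zero_le_one).2.2 1 h1 le_rfl)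
  refine ⟨fun x => k (s (max 0 (min 1 x))), hcont.comp_continuous (by fun_prop) hclamp, ?_, ?_,
    fun x => ⟨_, hsub (hs _ (hclamp x).1).1, rfl⟩, ?_⟩
  · simp [hs0]
  · simp [hs1]
  intro a b x ha hb hax hxb hab
  have hx : x ∈ Icc (0:ℝ) 1 := ⟨ha.1.trans hax, hxb.trans hb.2⟩
  simp only [hcl_eq a ha, hcl_eq b hb, hcl_eq x hx] at hab ⊢
  have m1 := hmono a x ha.1 hax
  have m2 := hmono x b hx.1 hxb
  rcases m1.eq_or_lt with h | h
  · rw [h]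
  rcases m2.eq_or_lt with h' | h'
  · rw [h', hab]
  exact absurd ⟨h, h'⟩ (min_thin_gap hE (hs a ha.1).1 (hs b hb.1).1 (h.trans h') hab _ (hs x hx.1).1)

theorem path_to_arc {k : ℝ → ℂ} (hk : Continuous k) (h01 : k 0 ≠ k 1) :
    ∃ α : ℝ → ℂ, Continuous α ∧ InjOn α (Icc 0 1) ∧ α 0 = k 0 ∧ α 1 = k 1 ∧
      ∀ x, ∃ t ∈ Icc (0:ℝ) 1, α x = k t := by
  obtain ⟨h, hc, hh0, hh1, himg, hfib⟩ := exists_monotone_fibres hk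
  let D : ℝ → ℝ → ℝ := fun x r => Metric.infDist (h r) (h '' Icc 0 x)
  have hDc : ∀ x, Continuous (D x) := fun x => (Metric.continuous_infDist_pt _).comp hc
  have hDint : ∀ x, IntervalIntegrable (D x) MeasureTheory.volume 0 1 := fun x =>
    (hDc x).intervalIntegrable _ _
  have hne : ∀ x, 0 ≤ x → (h '' Icc 0 x).Nonempty := fun x hx => ⟨_, 0, ⟨le_rfl, hx⟩, rfl⟩
  have hDanti : ∀ x y r, 0 ≤ x → x ≤ y → D y r ≤ D x r := fun x y r hx hxy =>
    Metric.infDist_le_infDist_of_subset (image_mono (Icc_subset_Icc_right hxy)) (hne x hx)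
  let τ : ℝ → ℝ := fun x => ∫ r in (0:ℝ)..1, D x r
  have hτanti : ∀ x y, 0 ≤ x → x ≤ y → τ y ≤ τ x := fun x y hx hxy =>
    intervalIntegral.integral_mono_on zero_le_one (hDint y) (hDint x) fun r _ => hDanti x y r hx hxy
  -- equal values of the height function
  have hτinj : ∀ x ∈ Icc (0:ℝ) 1, ∀ y ∈ Icc (0:ℝ) 1, x ≤ y → τ x = τ y → h x = h y := by
    intro x hx y hy hxy he
    have hz : D x y ≤ 0 := by
      by_contra hpos
      push Not at hpos
      have hyy : D y y = 0 := Metric.infDist_zero_of_mem ⟨y, ⟨hy.1, le_rfl⟩, rfl⟩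
      have h3 : 0 < ∫ r in (0:ℝ)..1, (D x r - D y r) :=
        intervalIntegral.integral_pos one_pos ((hDc x).sub (hDc y)).continuousOn
          (fun r _ => sub_nonneg.2 (hDanti x y r hx.1 hxy)) ⟨y, hy, by rw [hyy]; linarith⟩
      rw [intervalIntegral.integral_sub (hDint x) (hDint y)] at h3
      have : (∫ r in (0:ℝ)..1, D x r) = ∫ r in (0:ℝ)..1, D y r := he
      linarith
    have hz' : D x y = 0 := le_antisymm hz Metric.infDist_nonneg
    have hclosed : IsClosed (h '' Icc 0 x) := (isCompact_Icc.image hc).isClosed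
    obtain ⟨s, hs, hse⟩ := (hclosed.mem_iff_infDist_zero (hne x hx.1)).2 hz'
    rw [hfib s y x ⟨hs.1, hs.2.trans hx.2⟩ hy hs.2 hxy hse, hse]
  have hτeq : ∀ x ∈ Icc (0:ℝ) 1, ∀ y ∈ Icc (0:ℝ) 1, x ≤ y → h x = h y → τ x = τ y := by
    intro x hx y hy hxy he
    have : h '' Icc 0 x = h '' Icc 0 y := by
      refine Subset.antisymm (image_mono (Icc_subset_Icc_right hxy)) ?_
      rintro _ ⟨t, ht, rfl⟩
      rcases le_total t x with h' | h'
      · exact ⟨t, ⟨ht.1, h'⟩, rfl⟩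
      · exact ⟨x, ⟨hx.1, le_rfl⟩, (hfib x y t hx hy h' ht.2 he).symm⟩
    simp only [τ, D, this]
  have hτcont : ContinuousOn τ (Icc 0 1) := by
    have huc := (isCompact_Icc (a := (0:ℝ)) (b := 1)).uniformContinuousOn_of_continuous
      hc.continuousOn
    rw [Metric.uniformContinuousOn_iff] at huc
    rw [Metric.continuousOn_iff]
    intro b hb ε hε
    obtain ⟨δ, hδ, hδ'⟩ := huc (ε / 2) (by positivity)
    refine ⟨δ, hδ, fun a ha hab => ?_⟩
    have main : ∀ x ∈ Icc (0:ℝ) 1, ∀ y ∈ Icc (0:ℝ) 1, x ≤ y → dist x y < δ →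
        dist (τ x) (τ y) < ε := by
      intro x hx y hy hxy hd
      have hle : ∀ r, D x r ≤ D y r + ε / 2 := by
        intro r
        have hcomp : IsCompact (h '' Icc 0 y) := isCompact_Icc.image hc
        obtain ⟨_, ⟨u, hu, rfl⟩, hue⟩ := hcomp.exists_infDist_eq_dist (hne y hy.1) (h r)
        have hmem : min u x ∈ Icc 0 x := ⟨le_min hu.1 hx.1, min_le_right _ _⟩
        have h1 : D x r ≤ dist (h r) (h (min u x)) := Metric.infDist_le_dist_of_mem ⟨_, hmem, rfl⟩
        have h2 : dist (h u) (h (min u x)) < ε / 2 := by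
          refine hδ' u ⟨hu.1, hu.2.trans hy.2⟩ _ ⟨hmem.1, hmem.2.trans hx.2⟩ ?_
          rw [Real.dist_eq, abs_lt] at hd ⊢
          rcases le_total u x with h' | h'
          · rw [min_eq_left h']; constructor <;> linarith
          · rw [min_eq_right h']; constructor <;> linarith [hu.2]
        have h3 := dist_triangle (h r) (h u) (h (min u x))
        have h4 : D y r = dist (h r) (h u) := hue
        linarith
      have h5 : τ x ≤ ∫ r in (0:ℝ)..1, (D y r + ε / 2) :=
        intervalIntegral.integral_mono_on zero_le_one (hDint x)
          ((hDint y).add intervalIntegrable_const) fun r _ => hle r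
      rw [intervalIntegral.integral_add (hDint y) intervalIntegrable_const] at h5
      simp only [intervalIntegral.integral_const, sub_zero, one_smul] at h5
      have h6 := hτanti x y hx.1 hxy
      have h7 : τ x ≤ τ y + ε / 2 := h5
      rw [Real.dist_eq, abs_lt]
      constructor <;> linarith
    rcases le_total a b with h' | h'
    · exact main a ha b hb h' hab
    · rw [dist_comm] at hab ⊢
      exact main b hb a ha h' hab
  have z0 : (0:ℝ) ∈ Icc (0:ℝ) 1 := by simp
  have z1 : (1:ℝ) ∈ Icc (0:ℝ) 1 := by simp
  have hlt : τ 1 < τ 0 := by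
    rcases (hτanti 0 1 le_rfl zero_le_one).eq_or_lt with h' | h'
    · exact absurd (hτinj 0 z0 1 z1 zero_le_one h'.symm) (by rw [hh0, hh1]; exact h01)
    · exact h'
  have hden : 0 < τ 0 - τ 1 := sub_pos.2 hlt
  let T : unitInterval → unitInterval := fun x => ⟨(τ 0 - τ x) / (τ 0 - τ 1),
    div_nonneg (sub_nonneg.2 (hτanti 0 x le_rfl x.2.1)) hden.le,
    (div_le_one hden).2 (by linarith [hτanti x 1 x.2.1 x.2.2])⟩
  have hτc' : Continuous fun x : unitInterval => τ x :=
    hτcont.comp_continuous continuous_subtype_val fun x => x.2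
  have hTc : Continuous T := Continuous.subtype_mk ((continuous_const.sub hτc').div_const _) _
  have hTsurj : Function.Surjective T := by
    intro u
    have hmem : τ 0 - u * (τ 0 - τ 1) ∈ Icc (τ 1) (τ 0) :=
      ⟨by nlinarith [u.2.2], by nlinarith [u.2.1]⟩
    obtain ⟨x, hx, hxe⟩ := intermediate_value_Icc' zero_le_one hτcont hmem
    refine ⟨⟨x, hx⟩, Subtype.ext ?_⟩
    simp only [T, hxe]
    field_simp
    ring
  have hTq : IsQuotientMap T := hTc.isClosedMap.isQuotientMap hTc hTsurj
  have hTτ : ∀ x y, T x = T y ↔ τ x = τ y := by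
    intro x y
    rw [Subtype.ext_iff]
    simp only [T]
    rw [div_left_inj' hden.ne']
    constructor <;> intro h' <;> linarith
  have hTh : ∀ x y, T x = T y ↔ h x = h y := by
    intro x y
    rw [hTτ]
    rcases le_total (x:ℝ) y with h' | h'
    · exact ⟨hτinj x x.2 y y.2 h', hτeq x x.2 y y.2 h'⟩
    · exact ⟨fun e => (hτinj y y.2 x x.2 h' e.symm).symm, fun e => (hτeq y y.2 x x.2 h' e.symm).symm⟩
  choose σ hσ using hTsurj
  let α : unitInterval → ℂ := fun u => h (σ u)
  have hαT : ∀ x, α (T x) = h x := fun x => (hTh _ _).1 (hσ (T x))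
  have hαc : Continuous α := by
    rw [hTq.continuous_iff]
    have : α ∘ T = fun x : unitInterval => h x := funext hαT
    rw [this]
    fun_prop
  have hT0 : T 0 = 0 := by
    apply Subtype.ext
    simp [T]
  have hT1 : T 1 = 1 := by
    apply Subtype.ext
    simp only [T]
    exact div_self hden.ne'
  refine ⟨IccExtend zero_le_one α, hαc.Icc_extend', ?_, ?_, ?_, ?_⟩
  · intro x hx y hy hxy
    rw [IccExtend_of_mem _ _ hx, IccExtend_of_mem _ _ hy] at hxy
    have := (hTh _ _).2 hxy
    rw [hσ, hσ] at this
    exact congrArg Subtype.val this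
  · rw [IccExtend_of_mem _ _ z0, ← hh0]
    have := hαT 0
    rw [hT0] at this
    exact this
  · rw [IccExtend_of_mem _ _ z1, ← hh1]
    have := hαT 1
    rw [hT1] at this
    exact this
  · intro x
    exact himg _

theorem log_I_mul {w : ℂ} (h : 0 < w.re) :
    Complex.log (Complex.I * w) = Complex.log w + Complex.log Complex.I := by
  have hw : w ≠ 0 := fun h0 => by simp [h0] at h
  have h1 := abs_lt.1 (Complex.abs_arg_lt_pi_div_two_iff.2 (Or.inl h))
  rw [Complex.log_mul Complex.I_ne_zero hw, add_comm]
  rw [Complex.arg_I]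
  constructor <;> linarith [Real.pi_pos]

theorem side_const {E : Type*} [TopologicalSpace E] {S : Set E} (hS : IsPreconnected S)
    {Λ F : E → ℂ} (hΛ : ContinuousOn Λ S) (hF : ContinuousOn F S)
    (he : ∀ z ∈ S, Complex.exp (Λ z) = F z) {c : ℂ} (hc : c ≠ 0)
    (hre : ∀ z ∈ S, 0 < (c * F z).re) {x y : E} (hx : x ∈ S) (hy : y ∈ S) :
    Λ x - Complex.log (c * F x) = Λ y - Complex.log (c * F y) := by
  have hne : ∀ z ∈ S, c * F z ≠ 0 := fun z hz h0 => by
    have := hre z hz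
    simp [h0] at this
  refine exp_const (m := fun z => Λ z - Complex.log (c * F z)) hS
    (hΛ.sub (ContinuousOn.clog (continuousOn_const.mul hF) fun z hz => Or.inl (hre z hz)))
    (fun x hx y hy => ?_) x hx y hy
  have : ∀ z ∈ S, Complex.exp (Λ z - Complex.log (c * F z)) = c⁻¹ := by
    intro z hz
    rw [Complex.exp_sub, he z hz, Complex.exp_log (hne z hz)]
    have := hne z hz
    field_simp
    exact div_self (right_ne_zero_of_mul this)
  rw [this x hx, this y hy]

theorem rect_contra {S : ℝ} (hS : 0 ≤ S) {F : ℝ × ℝ → ℂ}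
    (hF : ContinuousOn F (Icc (-S) S ×ˢ Icc (0:ℝ) 1))
    (h0 : ∀ z ∈ Icc (-S) S ×ˢ Icc (0:ℝ) 1, F z ≠ 0)
    (hl : ∀ t ∈ Icc (0:ℝ) 1, (F (-S, t)).re < 0) (hr : ∀ t ∈ Icc (0:ℝ) 1, 0 < (F (S, t)).re)
    (hb : ∀ s ∈ Icc (-S) S, (F (s, 0)).im < 0) (ht : ∀ s ∈ Icc (-S) S, 0 < (F (s, 1)).im) :
    False := by
  obtain ⟨Λ, hΛ, he⟩ := hlog_convex (isCompact_Icc.prod isCompact_Icc)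
    ((convex_Icc _ _).prod (convex_Icc _ _)) hF h0
  have z0 : (0:ℝ) ∈ Icc (0:ℝ) 1 := by simp
  have z1 : (1:ℝ) ∈ Icc (0:ℝ) 1 := by simp
  have y0 : -S ∈ Icc (-S) S := ⟨le_rfl, by linarith⟩
  have y1 : S ∈ Icc (-S) S := ⟨by linarith, le_rfl⟩
  have vert : ∀ s ∈ Icc (-S) S, ∀ c : ℂ, c ≠ 0 → (∀ t ∈ Icc (0:ℝ) 1, 0 < (c * F (s, t)).re) →
      Λ (s, 0) - Complex.log (c * F (s, 0)) = Λ (s, 1) - Complex.log (c * F (s, 1)) := by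
    intro s hs c hc hre
    have hm : MapsTo (fun t : ℝ => (s, t)) (Icc 0 1) (Icc (-S) S ×ˢ Icc (0:ℝ) 1) :=
      fun t ht => ⟨hs, ht⟩
    exact side_const (Λ := fun t => Λ (s, t)) (F := fun t => F (s, t)) isPreconnected_Icc
      (hΛ.comp (by fun_prop) hm) (hF.comp (by fun_prop) hm) (fun t ht => he _ (hm ht)) hc hre z0 z1
  have horiz : ∀ t ∈ Icc (0:ℝ) 1, ∀ c : ℂ, c ≠ 0 → (∀ s ∈ Icc (-S) S, 0 < (c * F (s, t)).re) →
      Λ (-S, t) - Complex.log (c * F (-S, t)) = Λ (S, t) - Complex.log (c * F (S, t)) := by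
    intro t ht c hc hre
    have hm : MapsTo (fun s : ℝ => (s, t)) (Icc (-S) S) (Icc (-S) S ×ˢ Icc (0:ℝ) 1) :=
      fun s hs => ⟨hs, ht⟩
    exact side_const (Λ := fun s => Λ (s, t)) (F := fun s => F (s, t)) isPreconnected_Icc
      (hΛ.comp (by fun_prop) hm) (hF.comp (by fun_prop) hm) (fun s hs => he _ (hm hs)) hc hre y0 y1
  have e1 := vert (-S) y0 (-1) (by simp) (fun t ht => by simpa using hl t ht)
  have e2 := vert S y1 1 one_ne_zero (fun t ht => by simpa using hr t ht)
  have e3 := horiz 0 z0 Complex.I Complex.I_ne_zero (fun s hs => by simpa using hb s hs)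
  have e4 := horiz 1 z1 (-Complex.I) (by simp) (fun s hs => by simpa using ht s hs)
  have hII : ∀ z : ℂ, Complex.I * (Complex.I * z) = -1 * z := by
    intro z
    rw [← mul_assoc, Complex.I_mul_I]
  have c1 : Complex.log (Complex.I * F (S, 0)) = Complex.log (1 * F (S, 0)) + Complex.log Complex.I := by
    rw [one_mul]
    exact log_I_mul (hr 0 z0)
  have c2 : Complex.log (1 * F (S, 1)) = Complex.log (-Complex.I * F (S, 1)) + Complex.log Complex.I := by
    rw [← log_I_mul (by simpa using ht S y1)]
    congr 1
    rw [neg_mul, mul_neg, hII]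
    ring
  have c3 : Complex.log (-Complex.I * F (-S, 1)) = Complex.log (-1 * F (-S, 1)) + Complex.log Complex.I := by
    rw [← log_I_mul (by simpa using hl 1 z1)]
    congr 1
    ring
  have c4 : Complex.log (-1 * F (-S, 0)) = Complex.log (Complex.I * F (-S, 0)) + Complex.log Complex.I := by
    rw [← log_I_mul (by simpa using hb (-S) y0), hII]
  have hI : Complex.log Complex.I = 0 := by
    linear_combination (1/4 : ℂ) * (-e1 + e2 + e3 - e4 - c1 - c2 - c3 - c4)
  rw [Complex.log_I] at hI
  have : (Real.pi : ℂ) ≠ 0 := by exact_mod_cast Real.pi_ne_zero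
  simp [this] at hI

/-- A set with two horizontal rays attached. -/
def Lset (K : Set ℂ) (l r : ℂ) : Set ℂ :=
  K ∪ ({z | z.im = l.im ∧ z.re ≤ l.re} ∪ {z | z.im = r.im ∧ r.re ≤ z.re})

theorem sep_lset {k : ℝ → ℂ} (hk : Continuous k) {a b sl sr B : ℝ} (hsl : sl ∈ Icc a b)
    (hsr : sr ∈ Icc a b) (hB : ∀ z ∈ k '' Icc a b, |z.im| ≤ B)
    {C : Set ℂ} (hC : IsPreconnected C)
    (hCL : ∀ z ∈ C, z ∉ Lset (k '' Icc a b) (k sl) (k sr)) {u v : ℂ} (hu : u ∈ C) (hv : v ∈ C)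
    (hu' : B < u.im) (hv' : v.im < -B) : False := by
  set L := Lset (k '' Icc a b) (k sl) (k sr) with hL
  have hKc : IsClosed (k '' Icc a b) := (isCompact_Icc.image hk).isClosed
  have hLc : IsClosed L := by
    refine hKc.union (IsClosed.union ?_ ?_)
    · exact (isClosed_eq Complex.continuous_im continuous_const).inter
        (isClosed_le Complex.continuous_re continuous_const)
    · exact (isClosed_eq Complex.continuous_im continuous_const).inter
        (isClosed_le continuous_const Complex.continuous_re)
  have hLB : ∀ z ∈ L, |z.im| ≤ B := by
    rintro z (h | h | h)
    · exact hB z h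
    · rw [h.1]; exact hB _ ⟨sl, hsl, rfl⟩
    · rw [h.1]; exact hB _ ⟨sr, hsr, rfl⟩
  -- path
  have hW : IsOpen (connectedComponentIn Lᶜ u) := hLc.isOpen_compl.connectedComponentIn
  have huL : u ∈ Lᶜ := hCL u hu
  have hWc : IsConnected (connectedComponentIn Lᶜ u) := isConnected_connectedComponentIn_iff.2 huL
  have hsub : C ⊆ connectedComponentIn Lᶜ u := hC.subset_connectedComponentIn hu hCL
  have hpc : IsPathConnected (connectedComponentIn Lᶜ u) := hW.isConnected_iff_isPathConnected.1 hWc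
  obtain ⟨P, hP⟩ := hpc.joinedIn u (hsub hu) v (hsub hv)
  have hPL : ∀ t, P.extend t ∉ L := by
    intro t
    have h1 : P.extend t ∈ range P.extend := mem_range_self t
    rw [Path.extend_range] at h1
    obtain ⟨s, hs⟩ := h1
    rw [← hs]
    exact connectedComponentIn_subset _ _ (hP s)
  obtain ⟨R, hR⟩ := (isCompact_Icc (a := (0:ℝ)) (b := 1)).exists_bound_of_continuousOn
    (f := P.extend) (by fun_prop)
  let pr : ℝ → ℝ := fun s => max 0 (min 1 s)
  have hpr : ∀ s, pr s ∈ Icc (0:ℝ) 1 := fun x =>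
    ⟨le_max_left _ _, max_le zero_le_one (min_le_left _ _)⟩
  let ell : ℝ → ℂ := fun s => k (sl + pr s * (sr - sl)) + ((s - pr s : ℝ) : ℂ)
  have hellc : Continuous ell := by
    have : Continuous pr := by fun_prop
    exact (hk.comp (by fun_prop)).add (Complex.continuous_ofReal.comp (by fun_prop))
  have hneg : ∀ s, s ≤ 0 → ell s = k sl + (s : ℂ) := by
    intro s hs
    have : pr s = 0 := by simp only [pr]; rw [min_eq_right (by linarith), max_eq_left hs]
    simp [ell, this]
  have hpos : ∀ s, 1 ≤ s → ell s = k sr + ((s - 1 : ℝ) : ℂ) := by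
    intro s hs
    have : pr s = 1 := by simp only [pr]; rw [min_eq_left hs, max_eq_right zero_le_one]
    simp [ell, this]
  have hell : ∀ s, ell s ∈ L := by
    intro s
    rcases le_total s 0 with h | h
    · right; left
      rw [hneg s h]
      simp [h]
    rcases le_total s 1 with h' | h'
    · left
      have : pr s = s := by simp only [pr]; rw [min_eq_right h', max_eq_right h]
      refine ⟨sl + s * (sr - sl), ?_, by simp [ell, this]⟩
      constructor
      · nlinarith [hsl.1, hsr.1]
      · nlinarith [hsl.2, hsr.2]
    · right; right
      rw [hpos s h']
      simp [h']
  have hR0 : 0 ≤ R := (norm_nonneg _).trans (hR 0 (by simp))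
  set S := R + |(k sl).re| + |(k sr).re| + 2 with hSdef
  have hS1 : 1 ≤ S := by
    have := abs_nonneg (k sl).re
    have := abs_nonneg (k sr).re
    linarith
  refine rect_contra (S := S) (F := fun q => ell q.1 - P.extend q.2) (by linarith) (by fun_prop)
    (fun q _ => sub_ne_zero.2 fun h => hPL q.2 (h ▸ hell q.1)) ?_ ?_ ?_ ?_
  · intro t ht
    have h1 := (Complex.abs_re_le_norm _).trans (hR t ht)
    have h2 := abs_le.1 h1
    simp only [hneg (-S) (by linarith), Complex.sub_re, Complex.add_re, Complex.ofReal_re]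
    have := le_abs_self (k sl).re
    have := abs_nonneg (k sr).re
    linarith
  · intro t ht
    have h1 := (Complex.abs_re_le_norm _).trans (hR t ht)
    have h2 := abs_le.1 h1
    simp only [hpos S hS1, Complex.sub_re, Complex.add_re, Complex.ofReal_re]
    have := neg_abs_le (k sr).re
    have := abs_nonneg (k sl).re
    linarith
  · intro s _
    have := abs_le.1 (hLB _ (hell s))
    simp only [Path.extend_zero, Complex.sub_im]
    linarith
  · intro s _
    have := abs_le.1 (hLB _ (hell s))
    simp only [Path.extend_one, Complex.sub_im]
    linarith

theorem no_multiple_chord {k : ℝ → ℂ} (hk : Continuous k) {a b h : ℝ} (hab : a ≤ b) (hh : 0 < h)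
    (hno : ∀ s ∈ Icc a b, ∀ t ∈ Icc a b, k t ≠ k s + (h : ℂ) * Complex.I) (m : ℕ) :
    ∀ s ∈ Icc a b, ∀ t ∈ Icc a b, k t ≠ k s + ((m : ℂ) + 1) * ((h : ℂ) * Complex.I) := by
  have hKcomp : IsCompact (k '' Icc a b) := isCompact_Icc.image hk
  have hane : (Icc a b).Nonempty := ⟨a, le_rfl, hab⟩
  obtain ⟨sl, hsl, hslmin⟩ := isCompact_Icc.exists_isMinOn hane
    (Complex.continuous_re.comp hk).continuousOn
  obtain ⟨sr, hsr, hsrmax⟩ := isCompact_Icc.exists_isMaxOn hane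
    (Complex.continuous_re.comp hk).continuousOn
  have hlmin : ∀ s ∈ Icc a b, (k sl).re ≤ (k s).re := fun s hs => hslmin hs
  have hrmax : ∀ s ∈ Icc a b, (k s).re ≤ (k sr).re := fun s hs => hsrmax hs
  obtain ⟨B, hB'⟩ := hKcomp.exists_bound_of_continuousOn (f := fun z : ℂ => z.im)
    Complex.continuous_im.continuousOn
  have hB : ∀ z ∈ k '' Icc a b, |z.im| ≤ B := hB'
  have hB0 : 0 ≤ B := (abs_nonneg _).trans (hB _ ⟨a, ⟨le_rfl, hab⟩, rfl⟩)
  set L := Lset (k '' Icc a b) (k sl) (k sr) with hL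
  have hlr := hlmin sr hsr
  have hkey : ∀ z ∈ L, ∀ w ∈ L, w ≠ z + (h : ℂ) * Complex.I := by
    intro z hz w hw he
    have hre : w.re = z.re := by rw [he]; simp
    have him : w.im = z.im + h := by rw [he]; simp
    -- normalise to points of K
    have claim : ∃ s ∈ Icc a b, ∃ t ∈ Icc a b, k s = z ∧ k t = w := by
      rcases hz with ⟨s, hs, rfl⟩ | hz | hz <;> rcases hw with ⟨t, ht, rfl⟩ | hw | hw
      · exact ⟨s, hs, t, ht, rfl, rfl⟩
      · refine ⟨s, hs, sl, hsl, rfl, Complex.ext ?_ hw.1.symm⟩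
        linarith [hlmin s hs, hw.2]
      · refine ⟨s, hs, sr, hsr, rfl, Complex.ext ?_ hw.1.symm⟩
        linarith [hrmax s hs, hw.2]
      · refine ⟨sl, hsl, t, ht, Complex.ext ?_ hz.1.symm, rfl⟩
        linarith [hlmin t ht, hz.2]
      · linarith [hz.1, hw.1]
      · refine ⟨sl, hsl, sr, hsr, Complex.ext ?_ hz.1.symm, Complex.ext ?_ hw.1.symm⟩
        · linarith [hz.2, hw.2]
        · linarith [hz.2, hw.2]
      · refine ⟨sr, hsr, t, ht, Complex.ext ?_ hz.1.symm, rfl⟩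
        linarith [hrmax t ht, hz.2]
      · refine ⟨sr, hsr, sl, hsl, Complex.ext ?_ hz.1.symm, Complex.ext ?_ hw.1.symm⟩
        · linarith [hz.2, hw.2]
        · linarith [hz.2, hw.2]
      · linarith [hz.1, hw.1]
    obtain ⟨s, hs, t, ht, rfl, rfl⟩ := claim
    exact hno s hs t ht he
  have hLpre : IsPreconnected L := by
    have hK : IsPreconnected (k '' Icc a b) := isPreconnected_Icc.image _ hk.continuousOn
    have h1 : IsPreconnected {z : ℂ | z.im = (k sl).im ∧ z.re ≤ (k sl).re} :=
      ((convex_hyperplane (f := Complex.im) Complex.imLm.isLinear _).inter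
        (convex_halfSpace_re_le _)).isPreconnected
    have h2 : IsPreconnected {z : ℂ | z.im = (k sr).im ∧ (k sr).re ≤ z.re} :=
      ((convex_hyperplane (f := Complex.im) Complex.imLm.isLinear _).inter
        (convex_halfSpace_re_ge _)).isPreconnected
    have h3 := IsPreconnected.union (k sl) (mem_image_of_mem k hsl) (by exact ⟨rfl, le_rfl⟩) hK h1
    have h4 := IsPreconnected.union (k sr) (by exact Or.inl (mem_image_of_mem k hsr)) (by exact ⟨rfl, le_rfl⟩) h3 h2
    rwa [union_assoc] at h4
  have hLB : ∀ z ∈ L, |z.im| ≤ B := by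
    rintro z (h | h | h)
    · exact hB z h
    · rw [h.1]; exact hB _ ⟨sl, hsl, rfl⟩
    · rw [h.1]; exact hB _ ⟨sr, hsr, rfl⟩
  have hLfar : ∀ z ∈ L, z.re < (k sl).re → z.im = (k sl).im := by
    rintro z (⟨s, hs, rfl⟩ | h | h) hz
    · linarith [hlmin s hs]
    · exact h.1
    · linarith [h.2]
  let Lm : ℕ → Set ℂ := fun n => (fun z => z + (n : ℂ) * ((h : ℂ) * Complex.I)) '' L
  have hLmpre : ∀ n, IsPreconnected (Lm n) := fun n => hLpre.image _ (by fun_prop)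
  have hdisj : ∀ n, ∀ z ∈ Lm n, z ∉ Lm (n + 1) := by
    rintro n _ ⟨z, hz, rfl⟩ ⟨w, hw, he⟩
    apply hkey w hw z hz
    simp only at he
    push_cast at he
    linear_combination -he
  have hLmfar : ∀ n, ∀ z ∈ Lm n, z.re < (k sl).re → z.im = (k sl).im + n * h := by
    rintro n _ ⟨z, hz, rfl⟩ hre
    simp only [Complex.add_re, Complex.mul_re, Complex.natCast_re, Complex.natCast_im] at hre
    simp at hre
    have := hLfar z hz hre
    simp [this]
  have hpt : ∀ n : ℕ, (⟨(k sl).re - 1, (k sl).im + n * h⟩ : ℂ) ∈ Lm n := by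
    intro n
    refine ⟨⟨(k sl).re - 1, (k sl).im⟩, Or.inr (Or.inl ⟨rfl, by simp⟩), ?_⟩
    apply Complex.ext <;> simp
  have hsep : ∀ n (C : Set ℂ), IsPreconnected C → (∀ z ∈ C, z ∉ Lm n) → ∀ u ∈ C, ∀ v ∈ C,
      B + n * h < u.im → v.im < -B → False := by
    intro n C hC hCL u hu v hv hu' hv'
    have hC' : IsPreconnected ((fun z => z - (n : ℂ) * ((h : ℂ) * Complex.I)) '' C) :=
      hC.image _ (by fun_prop)
    refine sep_lset hk hsl hsr hB hC' ?_ ⟨u, hu, rfl⟩ ⟨v, hv, rfl⟩ ?_ ?_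
    · rintro _ ⟨z, hz, rfl⟩ hzL
      exact hCL z hz ⟨_, hzL, by simp⟩
    · simp
      linarith
    · have : 0 ≤ (n : ℝ) * h := by positivity
      simp
      linarith
  let U : ℕ → Set ℂ := fun n => {z | ∃ C, IsPreconnected C ∧ (∀ z ∈ C, z ∉ Lm n) ∧ z ∈ C ∧
    ∃ u ∈ C, B + n * h < u.im}
  have step1 : ∀ n, Lm (n + 1) ⊆ U n := by
    intro n z hz
    set Q : Set ℂ := {z | z.re < (k sl).re ∧ (k sl).im + n * h < z.im}
    have hQ : IsPreconnected Q :=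
      ((convex_halfSpace_re_lt _).inter (convex_halfSpace_im_gt _)).isPreconnected
    have hmem : (⟨(k sl).re - 1, (k sl).im + (n + 1 : ℕ) * h⟩ : ℂ) ∈ Q := by
      refine ⟨by simp, ?_⟩
      push_cast
      nlinarith
    refine ⟨Lm (n + 1) ∪ Q, IsPreconnected.union _ (hpt (n + 1)) hmem (hLmpre _) hQ, ?_, Or.inl hz,
      ⟨(k sl).re - 1, B + n * h + 1⟩, Or.inr ⟨by simp, ?_⟩, by simp⟩
    · rintro w (hw | hw) hw'
      · exact hdisj n w hw' hw
      · have := hLmfar n w hw' hw.1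
        linarith [hw.2]
    · have := abs_le.1 (hB _ ⟨sl, hsl, rfl⟩)
      simp only
      linarith
  have step2 : ∀ n, U (n + 1) ⊆ U n := by
    rintro n z ⟨C, hC, hCL, hzC, u, hu, hu'⟩
    push_cast at hu'
    by_cases hmeet : ∀ w ∈ C, w ∉ Lm n
    · exact ⟨C, hC, hmeet, hzC, u, hu, by nlinarith⟩
    exfalso
    push Not at hmeet
    obtain ⟨w, hwC, hwL⟩ := hmeet
    set Q : Set ℂ := {z | z.re < (k sl).re ∧ z.im < (k sl).im + (n + 1 : ℕ) * h} with hQdef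
    have hQ : IsPreconnected Q :=
      ((convex_halfSpace_re_lt _).inter (convex_halfSpace_im_lt _)).isPreconnected
    have hmem : (⟨(k sl).re - 1, (k sl).im + n * h⟩ : ℂ) ∈ Q := by
      refine ⟨by simp, ?_⟩
      push_cast
      nlinarith
    have h1 := IsPreconnected.union w hwC hwL hC (hLmpre n)
    have h2 := IsPreconnected.union _ (by exact Or.inr (hpt n)) hmem h1 hQ
    refine hsep (n + 1) _ h2 ?_ u (Or.inl (Or.inl hu)) ⟨(k sl).re - 1, -B - 1⟩
      (Or.inr ⟨by simp, ?_⟩) (by push_cast; exact hu') (by simp)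
    · rintro w ((hw | hw) | hw) hw'
      · exact hCL w hw hw'
      · exact hdisj n w hw hw'
      · have := hLmfar (n + 1) w hw' hw.1
        linarith [hw.2]
    · have := abs_le.1 (hB _ ⟨sl, hsl, rfl⟩)
      have h3 : 0 ≤ ((n + 1 : ℕ) : ℝ) * h := by positivity
      simp only
      linarith
  have hU0 : ∀ n, U n ⊆ U 0 := by
    intro n
    induction n with
    | zero => exact Subset.rfl
    | succ n ih => exact (step2 n).trans ih
  intro s hs t ht he
  have h1 : k t ∈ Lm (m + 1) := ⟨k s, Or.inl ⟨s, hs, rfl⟩, by simp only; push_cast; exact he.symm⟩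
  obtain ⟨C, -, hCL, hzC, -⟩ := hU0 m (step1 m h1)
  exact hCL _ hzC ⟨k t, Or.inl ⟨t, ht, rfl⟩, by simp⟩

theorem exists_simple_lift {S : Set ℂ} {w w' : ℂ} (hne : w ≠ w')
    (he : Complex.exp w = Complex.exp w') (hj : JoinedIn S w w') :
    ∃ β : ℝ → ℂ, Continuous β ∧ β 1 = β 0 + 2 * Real.pi * Complex.I ∧ (∀ t, β t ∈ S) ∧
      ∀ x ∈ Ico (0:ℝ) 1, ∀ y ∈ Ico (0:ℝ) 1, Complex.exp (β x) = Complex.exp (β y) → x = y := by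
  obtain ⟨γ, hγ⟩ := hj
  obtain ⟨α, hα, hinj, h0, h1, himg⟩ := path_to_arc (k := γ.extend) (by fun_prop) (by simpa using hne)
  rw [Path.extend_zero] at h0
  rw [Path.extend_one] at h1
  have hαS : ∀ t, α t ∈ S := by
    intro t
    obtain ⟨s, -, hs⟩ := himg t
    have h2 : γ.extend s ∈ range γ.extend := mem_range_self s
    rw [Path.extend_range] at h2
    obtain ⟨r, hr⟩ := h2
    rw [hs, ← hr]
    exact hγ r
  have hnorm : ∀ u v : ℂ, u ≠ v → Complex.exp u = Complex.exp v → 2 * Real.pi ≤ ‖u - v‖ := by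
    intro u v huv h
    obtain ⟨n, hn⟩ := Complex.exp_eq_exp_iff_exists_int.1 h
    have hn0 : n ≠ 0 := by
      rintro rfl
      simp at hn
      exact huv hn
    have h1n : (1:ℝ) ≤ |(n:ℝ)| := by exact_mod_cast Int.one_le_abs hn0
    rw [hn, add_sub_cancel_left]
    simp only [norm_mul, Complex.norm_intCast, Complex.norm_I, Complex.norm_real, mul_one,
      Complex.norm_ofNat, Real.norm_eq_abs, abs_of_pos Real.pi_pos]
    nlinarith [Real.pi_pos]
  set D : Set (ℝ × ℝ) := (Icc (0:ℝ) 1 ×ˢ Icc (0:ℝ) 1) ∩ {q | q.1 ≤ q.2 ∧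
    Complex.exp (α q.1) = Complex.exp (α q.2) ∧ 2 * Real.pi ≤ ‖α q.1 - α q.2‖} with hD
  have hDc : IsCompact D := by
    refine (isCompact_Icc.prod isCompact_Icc).inter_right ?_
    refine (isClosed_le continuous_fst continuous_snd).inter (IsClosed.inter ?_ ?_)
    · exact isClosed_eq (f := fun q : ℝ × ℝ => Complex.exp (α q.1))
        (g := fun q : ℝ × ℝ => Complex.exp (α q.2)) (by fun_prop) (by fun_prop)
    · exact isClosed_le (f := fun _ : ℝ × ℝ => 2 * Real.pi)
        (g := fun q : ℝ × ℝ => ‖α q.1 - α q.2‖) (by fun_prop) (by fun_prop)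
  have hDne : D.Nonempty := by
    refine ⟨(0, 1), ⟨by simp, by simp⟩, zero_le_one, ?_, ?_⟩
    · simp only [h0, h1, he]
    · simp only [h0, h1]
      exact hnorm _ _ hne he
  obtain ⟨⟨a, b⟩, hab, hmin⟩ := hDc.exists_isMinOn hDne
    (f := fun q : ℝ × ℝ => q.2 - q.1) (by fun_prop)
  obtain ⟨⟨ha, hb⟩, hle, hexp, hn2⟩ := hab
  simp only at ha hb hle hexp hn2
  have hmin' : ∀ s ∈ Icc (0:ℝ) 1, ∀ t ∈ Icc (0:ℝ) 1, Complex.exp (α s) = Complex.exp (α t) →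
      α s ≠ α t → b - a ≤ |t - s| := by
    intro s hs t ht hst hne'
    rcases le_total s t with h | h
    · have : (s, t) ∈ D := ⟨⟨hs, ht⟩, h, hst, hnorm _ _ hne' hst⟩
      rw [abs_of_nonneg (sub_nonneg.2 h)]
      exact hmin this
    · have : (t, s) ∈ D := ⟨⟨ht, hs⟩, h, hst.symm, hnorm _ _ hne'.symm hst.symm⟩
      rw [abs_sub_comm, abs_of_nonneg (sub_nonneg.2 h)]
      exact hmin this
  have hαab : α a ≠ α b := by
    intro h
    rw [h, sub_self, norm_zero] at hn2
    linarith [Real.pi_pos]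
  -- a chord of height exactly 2π
  obtain ⟨s, hs, t, ht, hst⟩ : ∃ s ∈ Icc a b, ∃ t ∈ Icc a b,
      α t = α s + ((2 * Real.pi : ℝ) : ℂ) * Complex.I := by
    by_contra hcon
    push Not at hcon
    have hnm := no_multiple_chord hα hle (by positivity : (0:ℝ) < 2 * Real.pi) hcon
    obtain ⟨n, hn⟩ := Complex.exp_eq_exp_iff_exists_int.1 hexp
    rcases lt_trichotomy n 0 with h | h | h
    · obtain ⟨m, hm⟩ := Int.eq_ofNat_of_zero_le (a := -n - 1) (by omega)
      have hnC : (n : ℂ) = -((m : ℂ) + 1) := by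
        have : n = -((m : ℤ) + 1) := by omega
        rw [this]
        push_cast
        rfl
      refine hnm m a ⟨le_rfl, hle⟩ b ⟨hle, le_rfl⟩ ?_
      rw [hn, hnC]
      push_cast
      ring
    · rw [h] at hn
      simp at hn
      exact hαab hn
    · obtain ⟨m, hm⟩ := Int.eq_ofNat_of_zero_le (a := n - 1) (by omega)
      have hnC : (n : ℂ) = (m : ℂ) + 1 := by
        have : n = (m : ℤ) + 1 := by omega
        rw [this]
        push_cast
        rfl
      refine hnm m b ⟨hle, le_rfl⟩ a ⟨le_rfl, hle⟩ ?_
      rw [hn, hnC]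
      push_cast
      ring
  have hIcc : ∀ x ∈ Icc a b, x ∈ Icc (0:ℝ) 1 := fun x hx => ⟨ha.1.trans hx.1, hx.2.trans hb.2⟩
  have hne_st : α s ≠ α t := by
    rw [hst]
    intro h
    have h2 := left_eq_add.1 h
    have : (Real.pi : ℂ) ≠ 0 := by exact_mod_cast Real.pi_ne_zero
    simp [this] at h2
  have hexp_st : Complex.exp (α s) = Complex.exp (α t) := by
    rw [hst]
    push_cast
    rw [Complex.exp_periodic]
  have habs := hmin' s (hIcc s hs) t (hIcc t ht) hexp_st hne_st
  have hts : |t - s| ≤ b - a := by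
    rw [abs_le]
    constructor <;> linarith [hs.1, hs.2, ht.1, ht.2]
  have hpos : 0 < b - a := by
    rcases hle.eq_or_lt with h | h
    · rw [h] at hαab
      exact absurd rfl hαab
    · linarith
  have htsne : t - s ≠ 0 := fun h => by rw [h, abs_zero] at habs; linarith
  refine ⟨fun x => α (s + x * (t - s)), by fun_prop, ?_, fun x => hαS _, ?_⟩
  · simp only [one_mul, zero_mul, add_zero, add_sub_cancel]
    rw [hst]
    push_cast
    rfl
  · intro x hx y hy hxy
    have hm : ∀ x ∈ Ico (0:ℝ) 1, s + x * (t - s) ∈ Icc (0:ℝ) 1 := by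
      intro x hx
      have e1 := (hIcc s hs)
      have e2 := (hIcc t ht)
      constructor
      · nlinarith [e1.1, e2.1, hx.1, hx.2]
      · nlinarith [e1.2, e2.2, hx.1, hx.2]
    by_cases heq : α (s + x * (t - s)) = α (s + y * (t - s))
    · have := hinj (hm x hx) (hm y hy) heq
      have h2 : (x - y) * (t - s) = 0 := by linarith
      rcases mul_eq_zero.1 h2 with h | h
      · linarith
      · exact absurd h htsne
    · exfalso
      have h3 := hmin' _ (hm x hx) _ (hm y hy) hxy heq
      have h4 : s + y * (t - s) - (s + x * (t - s)) = (y - x) * (t - s) := by ring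
      rw [h4, abs_mul] at h3
      have h5 : |y - x| < 1 := by
        rw [abs_lt]
        constructor <;> linarith [hx.1, hx.2, hy.1, hy.2]
      nlinarith [abs_nonneg (t - s)]

theorem caseB {X : Set ℂ} (hX : IsCompact X) (hconn : IsConnected X)
    (hlc : LocallyConnectedSpace X) {p : ℂ} (hp : p ∉ X) (hno : ¬ HLog (fun z => z - p) X) :
    ∃ g : X → X, Continuous g ∧ ∀ (x : X) (n : ℕ), 1 ≤ n → g^[n] x ≠ x := by
  have : CompactSpace X := isCompact_iff_compactSpace.1 hX
  obtain ⟨w, w', hne, he, hj⟩ := exists_deck hX hconn hlc hp hno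
  obtain ⟨β, hβ, hβ1, hβX, hβinj⟩ := exists_simple_lift hne he hj
  have : Fact ((0:ℝ) < 1) := ⟨one_pos⟩
  have hrep : ∀ u : AddCircle (1:ℝ), ∃ t ∈ Ico (0:ℝ) 1, (t : AddCircle (1:ℝ)) = u := by
    intro u
    have := AddCircle.coe_image_Ico_eq (1:ℝ) 0
    rw [zero_add] at this
    have hu : u ∈ (QuotientAddGroup.mk '' Ico (0:ℝ) 1 : Set (AddCircle (1:ℝ))) := by
      rw [this]
      trivial
    exact hu
  let jc : AddCircle (1:ℝ) → ℂ := AddCircle.liftIco 1 0 (fun t => p + Complex.exp (β t))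
  have hjt : ∀ t ∈ Ico (0:ℝ) 1, jc (t : AddCircle (1:ℝ)) = p + Complex.exp (β t) := fun t ht =>
    AddCircle.liftIco_zero_coe_apply ht
  have hjc : Continuous jc := by
    refine AddCircle.liftIco_zero_continuous ?_ (by fun_prop)
    rw [hβ1, Complex.exp_periodic]
  have hjX : ∀ u, jc u ∈ X := by
    intro u
    obtain ⟨t, ht, rfl⟩ := hrep u
    rw [hjt t ht]
    exact hβX t
  let j : AddCircle (1:ℝ) → X := fun u => ⟨jc u, hjX u⟩
  have hjcont : Continuous j := hjc.subtype_mk _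
  have hjinj : Function.Injective j := by
    intro u v huv
    obtain ⟨t, ht, rfl⟩ := hrep u
    obtain ⟨s, hs, rfl⟩ := hrep v
    have := congrArg Subtype.val huv
    simp only [j] at this
    rw [hjt t ht, hjt s hs] at this
    rw [hβinj t ht s hs (add_left_cancel this)]
  have hjemb : IsClosedEmbedding j := hjcont.isClosedEmbedding hjinj
  let φ0 : AddCircle (1:ℝ) → ℂ := AddCircle.liftIco 1 0 (fun t => β t - 2 * Real.pi * Complex.I * t)
  have hφ0 : Continuous φ0 := by
    refine AddCircle.liftIco_zero_continuous ?_ (by fun_prop)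
    rw [hβ1]
    simp
  have hφt : ∀ t ∈ Ico (0:ℝ) 1, φ0 (t : AddCircle (1:ℝ)) = β t - 2 * Real.pi * Complex.I * t :=
    fun t ht => AddCircle.liftIco_zero_coe_apply ht
  obtain ⟨φ, hφ⟩ := ContinuousMap.exists_extension' hjemb (⟨φ0, hφ0⟩ : C(AddCircle (1:ℝ), ℂ))
  have hφj : ∀ u, φ (j u) = φ0 u := fun u => congrFun hφ u
  let r : X → ℂ := fun x => ((x : ℂ) - p) * Complex.exp (-φ x)
  have hrc : Continuous r := by fun_prop
  have hr0 : ∀ x, r x ≠ 0 := fun x => mul_ne_zero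
    (sub_ne_zero.2 fun h => hp (h ▸ x.2)) (Complex.exp_ne_zero _)
  let c0 : X → Circle := fun x => ⟨r x / (‖r x‖ : ℂ), by
    refine mem_sphere_zero_iff_norm.2 ?_
    rw [norm_div, Complex.norm_real, norm_norm]
    exact div_self (norm_ne_zero_iff.2 (hr0 x))⟩
  have hc0 : Continuous c0 := by
    refine Continuous.subtype_mk (f := fun x => r x / (‖r x‖ : ℂ)) ?_ _
    exact hrc.div (by fun_prop) fun x => by
      exact_mod_cast norm_ne_zero_iff.2 (hr0 x)
  let ψ : X → AddCircle (1:ℝ) := fun x => (AddCircle.homeomorphCircle one_ne_zero).symm (c0 x)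
  have hψ : Continuous ψ := (Homeomorph.continuous _).comp hc0
  have hψj : ∀ u, ψ (j u) = u := by
    intro u
    obtain ⟨t, ht, rfl⟩ := hrep u
    have hrt : r (j (t : AddCircle (1:ℝ))) = Complex.exp ((2 * Real.pi * t : ℝ) * Complex.I) := by
      simp only [r]
      rw [hφj, hφt t ht]
      simp only [j]
      rw [hjt t ht, add_sub_cancel_left, ← Complex.exp_add]
      congr 1
      push_cast
      ring
    simp only [ψ]
    rw [Homeomorph.symm_apply_eq, AddCircle.homeomorphCircle_apply, AddCircle.toCircle_apply_mk]
    apply Circle.ext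
    simp only [c0]
    rw [hrt, Complex.norm_exp_ofReal_mul_I, Circle.coe_exp]
    simp
  refine ⟨fun x => j (ψ x + ((√2 : ℝ) : AddCircle (1:ℝ))), hjcont.comp (by fun_prop), ?_⟩
  intro x n hn hx
  set g : X → X := fun x => j (ψ x + ((√2 : ℝ) : AddCircle (1:ℝ))) with hg
  have hgj : ∀ u, g (j u) = j (u + ((√2 : ℝ) : AddCircle (1:ℝ))) := fun u => by
    simp only [hg]
    rw [hψj]
  have hit : ∀ (m : ℕ) u, g^[m] (j u) = j (u + m • ((√2 : ℝ) : AddCircle (1:ℝ))) := by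
    intro m
    induction m with
    | zero => intro u; simp
    | succ m ih =>
      intro u
      rw [Function.iterate_succ_apply', ih, hgj, add_assoc, succ_nsmul]
  obtain ⟨m, rfl⟩ : ∃ m, n = m + 1 := ⟨n - 1, by omega⟩
  obtain ⟨u, rfl⟩ : ∃ u, j u = x := by
    rw [Function.iterate_succ_apply'] at hx
    exact ⟨_, hx⟩
  rw [hit] at hx
  have h1 := hjinj hx
  have h2 : (m + 1) • ((√2 : ℝ) : AddCircle (1:ℝ)) = 0 := by
    simpa using h1
  rw [← AddCircle.coe_nsmul, AddCircle.coe_eq_zero_iff] at h2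
  obtain ⟨q, hq⟩ := h2
  have hirr : Irrational (((m + 1 : ℕ) : ℝ) * √2) := irrational_sqrt_two.natCast_mul (by omega)
  apply hirr
  refine ⟨q, ?_⟩
  simpa using hq

lemma fpp_of_ppp_complex {X : Set ℂ} (hX : IsCompact X) (hconn : IsConnected X)
    (hlc : LocallyConnectedSpace X) (hP : HasPPP X) : HasFPP X := by
  classical
  by_cases hlog : ∀ p ∉ X, HLog (fun z => z - p) X
  · intro f hf
    let F : ℂ → ℂ := fun z => if h : z ∈ X then (f ⟨z, h⟩ : ℂ) else 0
    have hFe : ∀ x : X, F x = f x := fun x => by simp [F]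
    have hF : ContinuousOn F X := by
      rw [continuousOn_iff_continuous_domRestrict]
      have : X.domRestrict F = fun x => (f x : ℂ) := by
        funext x
        exact hFe x
      rw [this]
      exact continuous_subtype_val.comp hf
    have hm : MapsTo F X X := fun x hx => by
      rw [hFe ⟨x, hx⟩]
      exact (f ⟨x, hx⟩).2
    obtain ⟨x, hx, hfx⟩ := caseA hX hconn (ulc_of_lc hX hlc)
      (fun g hg hg0 => eilenberg hX hlog g hg hg0) hF hm
    exact ⟨⟨x, hx⟩, Subtype.ext ((hFe ⟨x, hx⟩).symm.trans hfx)⟩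
  · push Not at hlog
    obtain ⟨p, hp, hno⟩ := hlog
    obtain ⟨g, hg, hgn⟩ := caseB hX hconn hlc hp hno
    obtain ⟨x, n, hn, hx⟩ := hP g hg
    exact absurd hx (hgn x n hn)

lemma ppp_transfer {Y Z : Type*} [TopologicalSpace Y] [TopologicalSpace Z] (e : Y ≃ₜ Z)
    (h : HasPPP Y) : HasPPP Z := by
  intro f hf
  obtain ⟨x, n, hn, hx⟩ := h (fun y => e.symm (f (e y)))
    (e.symm.continuous.comp (hf.comp e.continuous))
  refine ⟨e x, n, hn, ?_⟩
  have hs : Function.Semiconj e (fun y => e.symm (f (e y))) f := fun y => by simp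
  rw [← (hs.iterate_right n) x, hx]

lemma fpp_transfer {Y Z : Type*} [TopologicalSpace Y] [TopologicalSpace Z] (e : Y ≃ₜ Z)
    (h : HasFPP Y) : HasFPP Z := by
  intro f hf
  obtain ⟨x, hx⟩ := h (fun y => e.symm (f (e y)))
    (e.symm.continuous.comp (hf.comp e.continuous))
  exact ⟨e x, by rwa [Homeomorph.symm_apply_eq] at hx⟩

/-- A locally connected continuum in the plane has the fixed point property iff it has the
periodic point property. -/
theorem stmt_0 (X : Set (EuclideanSpace ℝ (Fin 2)))
    (hcomp : IsCompact X) (hconn : IsConnected X)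
    (hlc : LocallyConnectedSpace ↥X) :
    HasFPP ↥X ↔ HasPPP ↥X := by
  constructor
  · intro h f hf
    obtain ⟨x, hx⟩ := h f hf
    exact ⟨x, 1, le_rfl, hx⟩
  · intro h
    let e : EuclideanSpace ℝ (Fin 2) ≃ₜ ℂ := Complex.orthonormalBasisOneI.repr.symm.toHomeomorph
    have e' : X ≃ₜ (e '' X) := e.image X
    have hlc' : LocallyConnectedSpace (e '' X) := e'.symm.isOpenEmbedding.locallyConnectedSpace
    exact fpp_transfer e'.symm (fpp_of_ppp_complex (hcomp.image e.continuous)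
      (hconn.image e e.continuous.continuousOn) hlc' (ppp_transfer e' h))
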